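/- arXiv:1704.01029 — 2 statements merged into one kernel-verified Lean document; each statement's English description precedes it below -/
import Mathlib

section
/- Let p ∈ [2, ∞) be a real number. For every n ∈ ℕ and every bilinear form T : ℝⁿ × ℝⁿ → ℝ one has (∑_{j=1}^{n} (∑_{i=1}^{n} |T(e_i,e_j)|^{p/(p−1)})^{2(p−1)/p})^{1/2} ≤ A_{p/(p−1)} · ‖T‖_{p,∞}, where A_r is the optimal Khintchine constant. -/
open MeasureTheory Real Filter

/-- The `j`-th Rademacher function, `r_j(t) = sgn(sin(2^j π t))`. -/
noncomputable def rademacher (j : ℕ) (t : ℝ) : ℝ :=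
  Real.sign (Real.sin ((2 : ℝ) ^ j * Real.pi * t))

/-- `p₀ ∈ (1,2)` is the unique solution of `Γ((p₀+1)/2) = √π / 2`. -/
noncomputable def khintchineP0 : ℝ :=
  sInf {p : ℝ | 1 < p ∧ p < 2 ∧ Real.Gamma ((p + 1) / 2) = Real.sqrt Real.pi / 2}

/-- The optimal constant `A_r` in the Khintchine inequality. -/
noncomputable def khintchineA (r : ℝ) : ℝ :=
  if r ≤ khintchineP0 then (2 : ℝ) ^ (1 / r - 1 / 2)
  else if r < 2 then
    (1 / Real.sqrt 2) * (Real.Gamma ((r + 1) / 2) / Real.sqrt Real.pi) ^ (-(1 / r))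
  else 1

/-- The `ℓ_p` norm of a vector in `ℝⁿ` (for finite `p`). -/
noncomputable def lpNorm (p : ℝ) {n : ℕ} (x : Fin n → ℝ) : ℝ :=
  (∑ i, |x i| ^ p) ^ (1 / p)

/-- The `ℓ_∞` norm of a vector in `ℝⁿ`. -/
noncomputable def linfNorm {n : ℕ} (x : Fin n → ℝ) : ℝ :=
  ⨆ i, |x i|

/-- The norm `‖T‖_{p,∞} = sup{|T(x,y)| : ‖x‖_{ℓ_p} ≤ 1, ‖y‖_{ℓ_∞} ≤ 1}` of a bilinear form. -/
noncomputable def bilinOpNorm (p : ℝ) {N n : ℕ}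
    (T : (Fin N → ℝ) →ₗ[ℝ] (Fin n → ℝ) →ₗ[ℝ] ℝ) : ℝ :=
  sSup {c : ℝ | ∃ (x : Fin N → ℝ) (y : Fin n → ℝ),
    lpNorm p x ≤ 1 ∧ linfNorm y ≤ 1 ∧ c = |T x y|}

/-!
Khintchine's inequality is proved along the lines of Nazarov and Podkorytov. Writing `|a| ^ p` as a
constant multiple of `∫ (1 - cos (a * u)) * u ^ (-p - 1) du`, the mean of `|∑ ± aᵢ| ^ p` over all
signs becomes an integral of `1 - ∏ cos (aᵢ * u)`. When no coefficient dominates, the weighted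
AM-GM inequality reduces the claim to the family of integrals of `1 - |cos u| ^ s` with `s ≥ 2`;
these are compared with the Gaussian through the distribution functions of `|cos u|` and
`exp (-u ^ 2 / 2)` under `u ^ (-p - 1) du`, whose difference changes sign only once. A dominating
coefficient is handled by induction on the number of coefficients, with a modified profile in place
of the power function. The exponent `p₀` is the one at which the Gaussian constant equals the
constant of two equal coefficients; below it, Hölder's inequality between the exponents `r` and `2`
transports the inequality from `p₀` to `r`.

For a bilinear form `T`, Minkowski's inequality in `ℓ_{2/r}`, with `r = p / (p - 1)`, bounds the
left side by a sum over `i` of powers of row norms, and Khintchine's inequality bounds each of these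
by a mean over signs. Some choice of signs `y` does at least as well as the mean, and the `ℓ_r` norm
of `i ↦ T (eᵢ, y)` is at most the norm of `T` by duality.
-/

namespace Khintchine

/-! ### Taylor bounds for `sin`, `cos`, `tan` and `-log cos` -/

section Taylor

lemma le_of_hasDerivAt_le {f f' g g' : ℝ → ℝ} {a b : ℝ} (hab : a ≤ b)
    (hf : ∀ x ∈ Set.Icc a b, HasDerivAt f (f' x) x)
    (hg : ∀ x ∈ Set.Icc a b, HasDerivAt g (g' x) x)
    (ha : f a ≤ g a) (h : ∀ x ∈ Set.Ico a b, f' x ≤ g' x) : f b ≤ g b :=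
  image_le_of_deriv_right_le_deriv_boundary
    (fun x hx ↦ (hf x hx).continuousAt.continuousWithinAt)
    (fun x hx ↦ (hf x (Set.Ico_subset_Icc_self hx)).hasDerivWithinAt) ha
    (fun x hx ↦ (hg x hx).continuousAt.continuousWithinAt)
    (fun x hx ↦ (hg x (Set.Ico_subset_Icc_self hx)).hasDerivWithinAt) h ⟨hab, le_rfl⟩

variable {x : ℝ}

lemma cos_le_quartic (hx : 0 ≤ x) : cos x ≤ 1 - x ^ 2 / 2 + x ^ 4 / 24 := by
  refine le_of_hasDerivAt_le (f' := fun y ↦ -sin y) (g := fun y ↦ 1 - y ^ 2 / 2 + y ^ 4 / 24)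
    (g' := fun y ↦ -(y - y ^ 3 / 6)) hx (fun y _ ↦ hasDerivAt_cos y) (fun y _ ↦ ?_) (by simp)
    fun y hy ↦ neg_le_neg (sin_ge_sub_cube hy.1)
  convert! (((hasDerivAt_pow 2 y).div_const 2).const_sub 1).add
    ((hasDerivAt_pow 4 y).div_const 24) using 1
  norm_num; ring

lemma sin_le_quintic (hx : 0 ≤ x) : sin x ≤ x - x ^ 3 / 6 + x ^ 5 / 120 := by
  refine le_of_hasDerivAt_le (f' := cos) (g := fun y ↦ y - y ^ 3 / 6 + y ^ 5 / 120)
    (g' := fun y ↦ 1 - y ^ 2 / 2 + y ^ 4 / 24) hx (fun y _ ↦ hasDerivAt_sin y) (fun y _ ↦ ?_)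
    (by simp) fun y hy ↦ cos_le_quartic hy.1
  convert! ((hasDerivAt_id y).sub ((hasDerivAt_pow 3 y).div_const 6)).add
    ((hasDerivAt_pow 5 y).div_const 120) using 1
  norm_num; ring

lemma sextic_le_cos (hx : 0 ≤ x) : 1 - x ^ 2 / 2 + x ^ 4 / 24 - x ^ 6 / 720 ≤ cos x := by
  refine le_of_hasDerivAt_le (f := fun y ↦ 1 - y ^ 2 / 2 + y ^ 4 / 24 - y ^ 6 / 720)
    (f' := fun y ↦ -(y - y ^ 3 / 6 + y ^ 5 / 120)) (g' := fun y ↦ -sin y) hx (fun y _ ↦ ?_)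
    (fun y _ ↦ hasDerivAt_cos y) (by simp) fun y hy ↦ neg_le_neg (sin_le_quintic hy.1)
  convert! ((((hasDerivAt_pow 2 y).div_const 2).const_sub 1).add
    ((hasDerivAt_pow 4 y).div_const 24)).sub ((hasDerivAt_pow 6 y).div_const 720) using 1
  norm_num; ring

/-- The Taylor polynomial of `-log (cos x)` of degree `12`, a lower bound on `[0, π / 2)`. -/
noncomputable def logCosPoly (x : ℝ) : ℝ :=
  x ^ 2 / 2 + x ^ 4 / 12 + x ^ 6 / 45 + 17 * x ^ 8 / 2520 + 31 * x ^ 10 / 14175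
    + 691 * x ^ 12 / 935550

/-- The Taylor polynomial of `tan x` of degree `11`, a lower bound on `[0, π / 2)`. -/
noncomputable def tanPoly (x : ℝ) : ℝ :=
  x + x ^ 3 / 3 + 2 * x ^ 5 / 15 + 17 * x ^ 7 / 315 + 62 * x ^ 9 / 2835
    + 1382 * x ^ 11 / 155925

/-- The derivative of `tanPoly`. -/
noncomputable def tanPolyDeriv (x : ℝ) : ℝ :=
  1 + x ^ 2 + 2 * x ^ 4 / 3 + 17 * x ^ 6 / 45 + 62 * x ^ 8 / 315 + 1382 * x ^ 10 / 14175

lemma hasDerivAt_logCosPoly (x : ℝ) : HasDerivAt logCosPoly (tanPoly x) x := by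
  unfold logCosPoly tanPoly
  convert! ((((((hasDerivAt_pow 2 x).div_const 2).add ((hasDerivAt_pow 4 x).div_const 12)).add
    ((hasDerivAt_pow 6 x).div_const 45)).add
    (((hasDerivAt_pow 8 x).const_mul 17).div_const 2520)).add
    (((hasDerivAt_pow 10 x).const_mul 31).div_const 14175)).add
    (((hasDerivAt_pow 12 x).const_mul 691).div_const 935550) using 1
  norm_num; ring

lemma hasDerivAt_tanPoly (x : ℝ) : HasDerivAt tanPoly (tanPolyDeriv x) x := by
  unfold tanPoly tanPolyDeriv
  convert! (((((hasDerivAt_id x).add ((hasDerivAt_pow 3 x).div_const 3)).add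
    (((hasDerivAt_pow 5 x).const_mul 2).div_const 15)).add
    (((hasDerivAt_pow 7 x).const_mul 17).div_const 315)).add
    (((hasDerivAt_pow 9 x).const_mul 62).div_const 2835)).add
    (((hasDerivAt_pow 11 x).const_mul 1382).div_const 155925) using 1
  norm_num; ring

lemma tanPolyDeriv_le_one_add_sq (x : ℝ) : tanPolyDeriv x ≤ 1 + tanPoly x ^ 2 := by
  have remainder : 1 + tanPoly x ^ 2 - tanPolyDeriv x =
      21844/467775 * x ^ 12 + 47981/3274425 * x ^ 14 + 232028/49116375 * x ^ 16
      + 90616/63149625 * x ^ 18 + 171368/442047375 * x ^ 20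
      + 1909924/24312605625 * x ^ 22 := by
    unfold tanPoly tanPolyDeriv; ring
  rw [← sub_nonneg, remainder]
  positivity

lemma cos_pos_of_lt (hx : 0 ≤ x) (hx' : x < π / 2) : 0 < cos x :=
  cos_pos_of_mem_Ioo ⟨by linarith [pi_pos], hx'⟩

-- `tan` solves `y' = 1 + y ^ 2`, of which `tanPoly` is a subsolution; the integrating factor
-- `exp (-logCosPoly)` turns this into the monotonicity of the function below.
lemma tanPoly_mul_cos_le_sin (hx : 0 ≤ x) (hx' : x < π / 2) : tanPoly x * cos x ≤ sin x := by
  have deriv (y : ℝ) : HasDerivAt (fun y ↦ (sin y - tanPoly y * cos y) * exp (-logCosPoly y))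
      (cos y * (1 + tanPoly y ^ 2 - tanPolyDeriv y) * exp (-logCosPoly y)) y := by
    convert! ((hasDerivAt_sin y).sub ((hasDerivAt_tanPoly y).mul (hasDerivAt_cos y))).mul
      (hasDerivAt_logCosPoly y).neg.exp using 1
    simp only [Pi.sub_apply, Pi.mul_apply, Pi.neg_apply]
    ring
  have nonneg := le_of_hasDerivAt_le (f := fun _ ↦ (0 : ℝ)) (f' := fun _ ↦ 0) hx
    (fun y _ ↦ hasDerivAt_const y 0) (fun y _ ↦ deriv y) (by simp [tanPoly]) fun y hy ↦
      mul_nonneg (mul_nonneg (cos_pos_of_lt hy.1 (hy.2.trans hx')).le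
        (sub_nonneg.2 (tanPolyDeriv_le_one_add_sq y))) (exp_pos _).le
  linarith [(mul_nonneg_iff_of_pos_right (exp_pos _)).1 nonneg]

lemma tanPoly_le_tan (hx : 0 ≤ x) (hx' : x < π / 2) : tanPoly x ≤ tan x := by
  rw [tan_eq_sin_div_cos, le_div_iff₀ (cos_pos_of_lt hx hx')]
  exact tanPoly_mul_cos_le_sin hx hx'

/-- The function `-log (cos x)`; on `[0, π / 2)` the set where `t < cos u` is
`negLogCos u < -log t`, just as `t < exp (-u ^ 2 / 2)` is `u ^ 2 / 2 < -log t`. -/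
noncomputable def negLogCos (x : ℝ) : ℝ := -log (cos x)

lemma hasDerivAt_negLogCos (hx : 0 ≤ x) (hx' : x < π / 2) :
    HasDerivAt negLogCos (tan x) x := by
  convert! ((hasDerivAt_cos x).log (cos_pos_of_lt hx hx').ne').neg using 1
  rw [tan_eq_sin_div_cos]; ring

lemma logCosPoly_le_negLogCos (hx : 0 ≤ x) (hx' : x < π / 2) : logCosPoly x ≤ negLogCos x :=
  le_of_hasDerivAt_le hx (fun y _ ↦ hasDerivAt_logCosPoly y)
    (fun _ hy ↦ hasDerivAt_negLogCos hy.1 (hy.2.trans_lt hx')) (by simp [logCosPoly, negLogCos])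
    fun _ hy ↦ tanPoly_le_tan hy.1 (hy.2.trans hx')

lemma sq_div_two_le_negLogCos (hx : 0 ≤ x) (hx' : x < π / 2) : x ^ 2 / 2 ≤ negLogCos x := by
  refine le_trans ?_ (logCosPoly_le_negLogCos hx hx')
  have : 0 ≤ x ^ 4 / 12 + x ^ 6 / 45 + 17 * x ^ 8 / 2520 + 31 * x ^ 10 / 14175
    + 691 * x ^ 12 / 935550 := by positivity
  unfold logCosPoly
  linarith

lemma negLogCos_pos (hx : 0 < x) (hx' : x < π / 2) : 0 < negLogCos x :=
  (by positivity : 0 < x ^ 2 / 2).trans_le (sq_div_two_le_negLogCos hx.le hx')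

end Taylor

/-! ### A differential inequality for `-log cos` -/

section Ratio

/-- The Taylor lower bound `2 * logCosPoly x / x ^ 2` for `2 * negLogCos x / x ^ 2`, as a
polynomial in `X = x ^ 2`. -/
noncomputable def ratioPoly (X : ℝ) : ℝ :=
  1 + X / 6 + 2 * X ^ 2 / 45 + 17 * X ^ 3 / 1260 + 62 * X ^ 4 / 14175 + 691 * X ^ 5 / 467775

variable {x X : ℝ}

lemma sq_mul_ratioPoly_sq (x : ℝ) : x ^ 2 * ratioPoly (x ^ 2) = 2 * logCosPoly x := by
  unfold ratioPoly logCosPoly; ring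

lemma one_le_ratioPoly (hX : 0 ≤ X) : 1 ≤ ratioPoly X := by
  unfold ratioPoly
  have : 0 ≤ X / 6 + 2 * X ^ 2 / 45 + 17 * X ^ 3 / 1260 + 62 * X ^ 4 / 14175
    + 691 * X ^ 5 / 467775 := by positivity
  linarith

lemma ratioPoly_le (hX : 0 ≤ X) (hX' : X ≤ 36 / 25) : ratioPoly X ≤ 141 / 100 := by
  have : ratioPoly X ≤ ratioPoly (36 / 25) := by unfold ratioPoly; gcongr
  refine this.trans ?_
  unfold ratioPoly; norm_num

-- With the slope `34 / 25` in place of `4 / 3` the difference of the two sides has a leading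
-- term `X * 3 / 50` on `[0, 36 / 25]` that absorbs all negative coefficients.
lemma quintic_le_ratioPoly_mul_sextic (hX : 0 ≤ X) (hX' : X ≤ 36 / 25) :
    1 - X / 6 + X ^ 2 / 120 ≤ ratioPoly X * (1 + 34 / 25 * (ratioPoly X - 1)) *
      (1 - X / 2 + X ^ 2 / 24 - X ^ 3 / 720) := by
  set r : ℝ → ℝ := fun Z ↦ 31/1500 + 821/189000 * Z ^ 1 + 3337/2268000 * Z ^ 2
    + 30839/62370000 * Z ^ 3 + 36133213/26195400000 * Z ^ 4 + 2702471/23575860000 * Z ^ 5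
    + 137666971/3536379000000 * Z ^ 6 + 4019803/385786800000 * Z ^ 7
    + 64495943/21881345062500 * Z ^ 8 + 125893517/145875633750000 * Z ^ 9
    + 8117177/1969321055625000 * Z ^ 11 with hr
  have expansion : ratioPoly X * (1 + 34 / 25 * (ratioPoly X - 1)) *
      (1 - X / 2 + X ^ 2 / 24 - X ^ 3 / 720) - (1 - X / 6 + X ^ 2 / 120) =
      X * (3 / 50 - X * r X) + 32574431/328220175937500 * X ^ 12 := by
    simp only [hr, ratioPoly]; ring
  have tail_le : X * r X ≤ 3 / 50 := by
    have : 0 ≤ r X := by simp only [hr]; positivity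
    have : r X ≤ r (36 / 25) := by simp only [hr]; gcongr
    calc X * r X ≤ 36 / 25 * r (36 / 25) := by gcongr
      _ ≤ 3 / 50 := by simp only [hr]; norm_num
  have : 0 ≤ X * (3 / 50 - X * r X) := mul_nonneg hX (by linarith)
  rw [← sub_nonneg, expansion]
  positivity

lemma tan_le_ratioPoly (hx : 0 ≤ x) (hx' : x ≤ 6 / 5) :
    tan x ≤ x * (ratioPoly (x ^ 2) * (1 + 34 / 25 * (ratioPoly (x ^ 2) - 1))) := by
  set w := ratioPoly (x ^ 2)
  have one_le : 1 ≤ w := one_le_ratioPoly (sq_nonneg x)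
  have coeff_nonneg : 0 ≤ x * (w * (1 + 34 / 25 * (w - 1))) :=
    mul_nonneg hx (mul_nonneg (by linarith) (by linarith))
  rw [tan_eq_sin_div_cos, div_le_iff₀ (cos_pos_of_lt hx (by linarith [pi_gt_d2]))]
  calc sin x ≤ x - x ^ 3 / 6 + x ^ 5 / 120 := sin_le_quintic hx
    _ = x * (1 - x ^ 2 / 6 + (x ^ 2) ^ 2 / 120) := by ring
    _ ≤ x * (w * (1 + 34 / 25 * (w - 1)) *
        (1 - x ^ 2 / 2 + (x ^ 2) ^ 2 / 24 - (x ^ 2) ^ 3 / 720)) :=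
      mul_le_mul_of_nonneg_left
        (quintic_le_ratioPoly_mul_sextic (sq_nonneg x) (by nlinarith)) hx
    _ = x * (w * (1 + 34 / 25 * (w - 1))) * (1 - x ^ 2 / 2 + x ^ 4 / 24 - x ^ 6 / 720) := by
      ring
    _ ≤ x * (w * (1 + 34 / 25 * (w - 1))) * cos x :=
      mul_le_mul_of_nonneg_left (sextic_le_cos hx) coeff_nonneg

lemma mul_log_le {w : ℝ} (hw : 1 ≤ w) : w * log w ≤ (w ^ 2 - 1) / 2 := by
  have hw0 : 0 < w := by linarith
  calc w * log w ≤ w * sinh (log w) := by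
        gcongr; exact self_le_sinh_iff.2 (log_nonneg hw)
    _ = (w ^ 2 - 1) / 2 := by rw [sinh_log hw0]; field_simp

lemma sub_mul_log_le_rpow {z : ℝ} (hz : 0 ≤ z) (q : ℝ) : z - (1 - q) * (z * log z) ≤ z ^ q := by
  rcases hz.eq_or_lt with rfl | hz
  · simpa using zero_rpow_nonneg q
  calc z - (1 - q) * (z * log z) = z * ((q - 1) * log z + 1) := by ring
    _ ≤ z * exp ((q - 1) * log z) := by gcongr; exact add_one_le_exp _
    _ = z ^ q := by
        rw [mul_comm (q - 1), ← rpow_def_of_pos hz, rpow_sub_one hz.ne', mul_div_cancel₀ _ hz.ne']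

lemma sub_one_sub_mul_le_rpow {w : ℝ} (hw : 1 ≤ w) {q : ℝ} (hq : q ≤ 1) :
    w - (1 - q) * ((w ^ 2 - 1) / 2) ≤ w ^ q := by
  refine le_trans ?_ (sub_mul_log_le_rpow (zero_le_one.trans hw) q)
  have := mul_le_mul_of_nonneg_left (mul_log_le hw) (sub_nonneg.2 hq)
  linarith

lemma rpow_sub_one_ge {w q : ℝ} (hw : 1 ≤ w) (hw' : w ≤ 141 / 100) (hq : 9 / 10 ≤ q)
    (hq' : q ≤ 1) : q * (2 * (34 / 25) * (w - 1)) ≤ (2 * q + 1) * (w ^ q - 1) := by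
  have slope_le : q * (2 * (34 / 25)) ≤ (2 * q + 1) * (1 - (1 - q) * ((w + 1) / 2)) := by
    have : (1 - q) * ((w + 1) / 2) ≤ (1 - q) * (241 / 200) :=
      mul_le_mul_of_nonneg_left (by linarith) (by linarith)
    nlinarith
  calc q * (2 * (34 / 25) * (w - 1)) = q * (2 * (34 / 25)) * (w - 1) := by ring
    _ ≤ (2 * q + 1) * (1 - (1 - q) * ((w + 1) / 2)) * (w - 1) :=
      mul_le_mul_of_nonneg_right slope_le (by linarith)
    _ = (2 * q + 1) * (w - (1 - q) * ((w ^ 2 - 1) / 2) - 1) := by ring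
    _ ≤ (2 * q + 1) * (w ^ q - 1) :=
      mul_le_mul_of_nonneg_left (sub_le_sub_right (sub_one_sub_mul_le_rpow hw hq') 1)
        (by linarith)

-- In terms of `w = ratioPoly (x ^ 2)`, a lower bound for `2 * negLogCos x / x ^ 2` lying in
-- `[1, 141 / 100]`, the left side is at most `q * (2 * (34 / 25) * (w - 1))` and the right side
-- at least `(2 * q + 1) * (w ^ q - 1)`.
lemma tan_div_negLogCos_le {q : ℝ} (hx : 0 < x) (hx' : x ≤ 6 / 5) (hq : 9 / 10 ≤ q)
    (hq' : q ≤ 1) : q * (x * tan x / negLogCos x - 2) ≤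
      (2 * q + 1) * ((2 * negLogCos x / x ^ 2) ^ q - 1) := by
  have x_lt : x < π / 2 := by linarith [pi_gt_d2]
  set w := ratioPoly (x ^ 2)
  have one_le_w : 1 ≤ w := one_le_ratioPoly (sq_nonneg x)
  have w_le : w ≤ 141 / 100 := ratioPoly_le (sq_nonneg x) (by nlinarith)
  have sq_mul_w_le : x ^ 2 * w ≤ 2 * negLogCos x := by
    rw [sq_mul_ratioPoly_sq]; linarith [logCosPoly_le_negLogCos hx.le x_lt]
  have w_le_ratio : w ≤ 2 * negLogCos x / x ^ 2 := by
    rw [le_div_iff₀ (by positivity)]; linarith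
  have tan_div_le : x * tan x / negLogCos x ≤ 2 * (1 + 34 / 25 * (w - 1)) := by
    rw [div_le_iff₀ (negLogCos_pos hx x_lt)]
    calc x * tan x ≤ x * (x * (w * (1 + 34 / 25 * (w - 1)))) := by
          gcongr; exact tan_le_ratioPoly hx.le hx'
      _ = (1 + 34 / 25 * (w - 1)) * (x ^ 2 * w) := by ring
      _ ≤ (1 + 34 / 25 * (w - 1)) * (2 * negLogCos x) :=
        mul_le_mul_of_nonneg_left sq_mul_w_le (by linarith)
      _ = 2 * (1 + 34 / 25 * (w - 1)) * negLogCos x := by ring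
  calc q * (x * tan x / negLogCos x - 2) ≤ q * (2 * (34 / 25) * (w - 1)) :=
        mul_le_mul_of_nonneg_left (by linarith) (by linarith)
    _ ≤ (2 * q + 1) * (w ^ q - 1) := rpow_sub_one_ge one_le_w w_le hq hq'
    _ ≤ (2 * q + 1) * ((2 * negLogCos x / x ^ 2) ^ q - 1) := by gcongr

end Ratio

/-! ### Tails of the distribution functions of `|cos u|` and `exp (-u ^ 2 / 2)` -/

section Tails

variable {p x y : ℝ}

lemma antitoneOn_of_hasDerivAt_nonpos {f f' : ℝ → ℝ} {s : Set ℝ} (hs : Convex ℝ s)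
    (hf : ∀ x ∈ s, HasDerivAt f (f' x) x) (h : ∀ x ∈ s, f' x ≤ 0) : AntitoneOn f s :=
  antitoneOn_of_hasDerivWithinAt_nonpos hs (fun x hx ↦ (hf x hx).continuousAt.continuousWithinAt)
    (fun x hx ↦ (hf x (interior_subset hx)).hasDerivWithinAt)
    fun x hx ↦ h x (interior_subset hx)

lemma antitoneOn_div_id {f f' : ℝ → ℝ} {s : Set ℝ} (hs : Convex ℝ s) (h0 : ∀ x ∈ s, 0 < x)
    (hf : ∀ x ∈ s, HasDerivAt f (f' x) x) (h : ∀ x ∈ s, f' x * x ≤ f x) :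
    AntitoneOn (fun x ↦ f x / x) s := by
  refine antitoneOn_of_hasDerivAt_nonpos (f' := fun x ↦ (f' x * x - f x * 1) / x ^ 2) hs
    (fun x hx ↦ (hf x hx).div (hasDerivAt_id x) (h0 x hx).ne') fun x hx ↦ ?_
  exact div_nonpos_of_nonpos_of_nonneg (by linarith [h x hx]) (sq_nonneg x)

lemma hasDerivAt_rpow_neg {f : ℝ → ℝ} {f' : ℝ} (hf : HasDerivAt f f' x) (h : 0 < f x) :
    HasDerivAt (fun y ↦ f y ^ (-p)) (-p * f x ^ (-p - 1) * f') x := by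
  convert! hf.rpow_const (p := -p) (Or.inl h.ne') using 1; ring

lemma rpow_neg_tangent_le {a b r : ℝ} (ha : 0 < a) (hb : 0 < b) (hr : 0 ≤ r) :
    b ^ (-r) + r * (b - a) * b ^ (-r - 1) ≤ a ^ (-r) := by
  have log_le := mul_le_mul_of_nonneg_left (log_le_sub_one_of_pos (div_pos ha hb)) hr
  calc b ^ (-r) + r * (b - a) * b ^ (-r - 1) = b ^ (-r) * (-(r * (a / b - 1)) + 1) := by
        rw [rpow_sub_one hb.ne']; field_simp; ring
    _ ≤ b ^ (-r) * (-(r * log (a / b)) + 1) := by gcongr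
    _ ≤ b ^ (-r) * exp (-(r * log (a / b))) := by gcongr; exact add_one_le_exp _
    _ = a ^ (-r) := by
        rw [rpow_def_of_pos ha, rpow_def_of_pos hb, ← exp_add, log_div ha.ne' hb.ne']
        congr 1; ring

-- The trapezoid (Hermite–Hadamard) bound for the integral of `p * z ^ (-p - 1)`.
lemma rpow_neg_sub_rpow_neg_le {a b : ℝ} (ha : 0 < a) (hab : a ≤ b) (hp : 0 ≤ p) :
    a ^ (-p) - b ^ (-p) ≤ p * ((b - a) / 2) * (a ^ (-p - 1) + b ^ (-p - 1)) := by
  refine le_of_hasDerivAt_le (f := fun z ↦ a ^ (-p) - z ^ (-p))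
    (g := fun z ↦ p * ((z - a) / 2) * (a ^ (-p - 1) + z ^ (-p - 1)))
    (f' := fun z ↦ p * z ^ (-p - 1))
    (g' := fun z ↦ p / 2 * (a ^ (-p - 1) + z ^ (-p - 1) - (p + 1) * (z - a) * z ^ (-p - 1 - 1)))
    hab (fun z hz ↦ ?_) (fun z hz ↦ ?_) (by simp) fun z hz ↦ ?_
  · convert! (hasDerivAt_rpow_neg (hasDerivAt_id z) (ha.trans_le hz.1)).const_sub (a ^ (-p)) using 1
    simp
  · rw [neg_sub_left, add_comm 1 p]
    convert! ((((hasDerivAt_id z).sub_const a).div_const 2).const_mul p).mul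
      ((hasDerivAt_rpow_neg (p := p + 1) (hasDerivAt_id z) (ha.trans_le hz.1)).const_add
        (a ^ (-(p + 1)))) using 1
    simp only [id]; ring
  · have := rpow_neg_tangent_le ha (ha.trans_le hz.1) (by linarith : 0 ≤ p + 1)
    rw [neg_add, ← sub_eq_add_neg] at this
    nlinarith

/-- `p` times the mass that `u ^ (-p - 1) du` gives to `{u > 0 | |cos u| < cos x}`, for
`0 < x < π / 2`. -/
noncomputable def cosTail (p x : ℝ) : ℝ :=
  ∑' k : ℕ, ((k * π + x) ^ (-p) - ((k + 1) * π - x) ^ (-p))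

/-- `p` times the mass that `u ^ (-p - 1) du` gives to `{u > 0 | exp (-u ^ 2 / 2) < cos x}`, for
`0 < x < π / 2`. -/
noncomputable def gaussTail (p x : ℝ) : ℝ := (2 * negLogCos x) ^ (-(p / 2))

lemma summable_add_rpow_neg {c : ℝ} (hp : 1 < p) (hc : 0 < c) :
    Summable fun k : ℕ ↦ (k * π + c) ^ (-p) := by
  rw [← summable_nat_add_iff 1]
  refine Summable.of_nonneg_of_le (fun k ↦ rpow_nonneg (by positivity) _) (fun k ↦ ?_)
    ((summable_nat_add_iff 1).2 (summable_nat_rpow.2 (by linarith : -p < -1)))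
  refine rpow_le_rpow_of_nonpos (by positivity) ?_ (by linarith)
  calc ((k + 1 : ℕ) : ℝ) = (k + 1 : ℕ) * 1 := (mul_one _).symm
    _ ≤ (k + 1 : ℕ) * π + c := by
      have : (1 : ℝ) ≤ π := by linarith [pi_gt_three]
      have : ((k + 1 : ℕ) : ℝ) * 1 ≤ (k + 1 : ℕ) * π := by gcongr
      linarith

lemma summable_succ_add_rpow_neg (hp : 1 < p) (hx : 0 < x) :
    Summable fun k : ℕ ↦ ((k + 1) * π + x) ^ (-p) := by
  simpa using (summable_nat_add_iff 1).2 (summable_add_rpow_neg hp hx)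

lemma summable_succ_sub_rpow_neg (hp : 1 < p) (hx : x < π) :
    Summable fun k : ℕ ↦ ((k + 1) * π - x) ^ (-p) := by
  convert summable_add_rpow_neg hp (sub_pos.2 hx) using 3; ring

lemma cosTail_eq_rpow_neg_sub_tsum (hp : 1 < p) (hx : 0 < x) (hx' : x < π) :
    cosTail p x = x ^ (-p) -
      ∑' k : ℕ, (((k + 1) * π - x) ^ (-p) - ((k + 1) * π + x) ^ (-p)) := by
  have summable := summable_add_rpow_neg hp hx
  have summable_sub := summable_succ_sub_rpow_neg hp hx'
  rw [cosTail, summable.tsum_sub summable_sub,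
    summable_sub.tsum_sub (summable_succ_add_rpow_neg hp hx), summable.tsum_eq_zero_add]
  simp; ring

lemma hasDerivAt_gaussTail (hx : 0 < x) (hx' : x < π / 2) :
    HasDerivAt (gaussTail p) (-(p * tan x / (2 * negLogCos x)) * gaussTail p x) x := by
  have hL := negLogCos_pos hx hx'
  convert! hasDerivAt_rpow_neg (p := p / 2) ((hasDerivAt_negLogCos hx.le hx').const_mul 2)
    (by positivity) using 1
  rw [gaussTail, rpow_sub_one (by positivity)]
  ring

lemma rpow_neg_eq_mul_gaussTail (hx : 0 < x) (hx' : x < π / 2) :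
    x ^ (-p) = (2 * negLogCos x / x ^ 2) ^ (p / 2) * gaussTail p x := by
  have hL : 0 < 2 * negLogCos x := mul_pos two_pos (negLogCos_pos hx hx')
  rw [gaussTail, div_rpow hL.le (sq_nonneg x), rpow_neg hL.le, rpow_neg hx.le, ← rpow_natCast,
    ← rpow_mul hx.le, Nat.cast_ofNat, mul_div_cancel₀ p two_ne_zero]
  field_simp

lemma antitoneOn_rpow_neg_sub_gaussTail_div (hp : 9 / 5 ≤ p) (hp' : p ≤ 2) :
    AntitoneOn (fun x ↦ (x ^ (-p) - gaussTail p x) / x) (Set.Ioc 0 (6 / 5)) := by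
  have lt_pi_div_two {x : ℝ} (hx : x ∈ Set.Ioc 0 (6 / 5 : ℝ)) : x < π / 2 := by
    linarith [pi_gt_d2, hx.2]
  refine antitoneOn_div_id (convex_Ioc _ _) (fun x hx ↦ hx.1)
    (fun x hx ↦ (hasDerivAt_rpow_neg (hasDerivAt_id x) hx.1).sub
      (hasDerivAt_gaussTail hx.1 (lt_pi_div_two hx))) fun x hx ↦ ?_
  have hx0 := hx.1
  have hL := negLogCos_pos hx0 (lt_pi_div_two hx)
  have gauss_nonneg : 0 ≤ gaussTail p x := rpow_nonneg (by positivity) _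
  have ratio_le := mul_le_mul_of_nonneg_right
    (tan_div_negLogCos_le (q := p / 2) hx0 hx.2 (by linarith) (by linarith)) gauss_nonneg
  rw [id, rpow_sub_one hx0.ne', rpow_neg_eq_mul_gaussTail (p := p) hx0 (lt_pi_div_two hx)]
  set W := (2 * negLogCos x / x ^ 2) ^ (p / 2)
  have deriv_mul : (-p * (W * gaussTail p x / x) * 1
      - -(p * tan x / (2 * negLogCos x)) * gaussTail p x) * x =
      p / 2 * (x * tan x / negLogCos x) * gaussTail p x - p * (W * gaussTail p x) := by
    field_simp; ring
  rw [deriv_mul]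
  linarith

lemma sub_rpow_neg_sub_add_rpow_neg_div_le {m : ℝ} (hp : 0 ≤ p) (hx : 0 < x) (hxy : x ≤ y)
    (hy : y < m) :
    ((m - x) ^ (-p) - (m + x) ^ (-p)) / x ≤ ((m - y) ^ (-p) - (m + y) ^ (-p)) / y := by
  have antitone : AntitoneOn (fun x ↦ ((m + x) ^ (-p) - (m - x) ^ (-p)) / x) (Set.Ioo 0 m) := by
    refine antitoneOn_div_id (convex_Ioo _ _) (fun x hx ↦ hx.1) (fun x hx ↦
      (hasDerivAt_rpow_neg ((hasDerivAt_id x).const_add m) (add_pos (hx.1.trans hx.2) hx.1)).sub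
        (hasDerivAt_rpow_neg ((hasDerivAt_id x).const_sub m) (sub_pos.2 hx.2))) fun x hx ↦ ?_
    have trapezoid := rpow_neg_sub_rpow_neg_le (p := p) (sub_pos.2 hx.2)
      (by linarith [hx.1] : m - x ≤ m + x) hp
    rw [show (m + x - (m - x)) / 2 = x by ring] at trapezoid
    simp only [id]
    linarith
  have := antitone ⟨hx, hxy.trans_lt hy⟩ ⟨hx.trans_le hxy, hy⟩ hxy
  rw [← neg_le_neg_iff, ← neg_div, ← neg_div, neg_sub, neg_sub]
  exact this

lemma gaussTail_le_cosTail_of_le_near (hp : 9 / 5 ≤ p) (hp' : p ≤ 2) (hx : 0 < x) (hxy : x ≤ y)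
    (hy : y ≤ 6 / 5) (h : gaussTail p y ≤ cosTail p y) : gaussTail p x ≤ cosTail p x := by
  set S : ℝ → ℝ := fun z ↦ ∑' k : ℕ, (((k + 1) * π - z) ^ (-p) - ((k + 1) * π + z) ^ (-p))
  have hy0 := hx.trans_le hxy
  have hy_pi : y < π := by linarith [pi_gt_d2]
  have summable {z : ℝ} (hz : 0 < z) (hz' : z < π) :
      Summable fun k : ℕ ↦ (((k + 1) * π - z) ^ (-p) - ((k + 1) * π + z) ^ (-p)) / z :=
    ((summable_succ_sub_rpow_neg (by linarith) hz').sub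
      (summable_succ_add_rpow_neg (by linarith) hz)).div_const z
  have cosTail_eq {z : ℝ} : 0 < z → z < π → cosTail p z = z ^ (-p) - S z :=
    cosTail_eq_rpow_neg_sub_tsum (by linarith)
  rw [cosTail_eq hx (by linarith)]
  rw [cosTail_eq hy0 hy_pi] at h
  have : S x / x ≤ (x ^ (-p) - gaussTail p x) / x := calc
    S x / x ≤ S y / y := by
      rw [← tsum_div_const, ← tsum_div_const]
      refine (summable hx (by linarith)).tsum_le_tsum (fun k ↦ ?_) (summable hy0 hy_pi)
      refine sub_rpow_neg_sub_add_rpow_neg_div_le (by linarith) hx hxy ?_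
      have : 0 ≤ k * π := by positivity
      linarith
    _ ≤ (y ^ (-p) - gaussTail p y) / y := by gcongr; linarith
    _ ≤ (x ^ (-p) - gaussTail p x) / x :=
      antitoneOn_rpow_neg_sub_gaussTail_div hp hp' ⟨hx, hxy.trans hy⟩ ⟨hy0, hy⟩ hxy
  rw [div_le_div_iff_of_pos_right hx] at this
  linarith

lemma one_le_negLogCos (hx : 6 / 5 ≤ x) (hx' : x < π / 2) : 1 ≤ negLogCos x := by
  refine le_trans ?_ (logCosPoly_le_negLogCos (by linarith) hx')
  have : logCosPoly (6 / 5) ≤ logCosPoly x := by unfold logCosPoly; gcongr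
  refine le_trans ?_ this
  unfold logCosPoly; norm_num

lemma pi_div_two_sub_mul_tan_le (hx : 0 < x) (hx' : x < π / 2) : (π / 2 - x) * tan x ≤ 1 := by
  have lt_cot := lt_tan (by linarith : 0 < π / 2 - x) (by linarith)
  rw [tan_pi_div_two_sub] at lt_cot
  have tan_pos := tan_pos_of_pos_of_lt_pi_div_two hx hx'
  calc (π / 2 - x) * tan x ≤ (tan x)⁻¹ * tan x := by gcongr
    _ = 1 := inv_mul_cancel₀ tan_pos.ne'

lemma rpow_neg_gap_mul_tan_le {c : ℝ} (hp : 0 ≤ p) (hp' : p ≤ 2) (hc : 0 ≤ c) (hx : 6 / 5 ≤ x)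
    (hx' : x < π / 2) : ((c + x) ^ (-p) - (c + π - x) ^ (-p)) * tan x ≤
      ((c + x) ^ (-p - 1) + (c + π - x) ^ (-p - 1)) * (2 * negLogCos x) := by
  have hx0 : 0 < x := by linarith
  have trapezoid := rpow_neg_sub_rpow_neg_le (p := p) (by positivity : 0 < c + x)
    (by linarith : c + x ≤ c + π - x) hp
  rw [show (c + π - x - (c + x)) / 2 = π / 2 - x by ring] at trapezoid
  set S := (c + x) ^ (-p - 1) + (c + π - x) ^ (-p - 1)
  have S_nonneg : 0 ≤ S := add_nonneg (rpow_nonneg (by linarith) _) (rpow_nonneg (by linarith) _)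
  calc _ ≤ p * (π / 2 - x) * S * tan x :=
        mul_le_mul_of_nonneg_right trapezoid (tan_pos_of_pos_of_lt_pi_div_two hx0 hx').le
    _ = S * (p * ((π / 2 - x) * tan x)) := by ring
    _ ≤ S * (2 * negLogCos x) := by
      have := mul_le_mul_of_nonneg_left (pi_div_two_sub_mul_tan_le hx0 hx') hp
      have := one_le_negLogCos hx hx'
      exact mul_le_mul_of_nonneg_left (by linarith) S_nonneg

lemma antitoneOn_rpow_neg_gap_mul_negLogCos_rpow {c : ℝ} (hp : 0 ≤ p) (hp' : p ≤ 2)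
    (hc : 0 ≤ c) :
    AntitoneOn (fun x ↦ ((c + x) ^ (-p) - (c + π - x) ^ (-p)) * (2 * negLogCos x) ^ (p / 2))
      (Set.Ico (6 / 5) (π / 2)) := by
  refine antitoneOn_of_hasDerivAt_nonpos (f' := fun x ↦
      (-p * (c + x) ^ (-p - 1) * 1 - (-p * (c + π - x) ^ (-p - 1) * (-1))) *
      (2 * negLogCos x) ^ (p / 2) + ((c + x) ^ (-p) - (c + π - x) ^ (-p)) *
      (2 * tan x * (p / 2) * (2 * negLogCos x) ^ (p / 2 - 1))) (convex_Ico _ _)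
    (fun x hx ↦ ?_) (fun x hx ↦ ?_)
  all_goals
    have hx0 : 0 < x := by linarith [hx.1]
    have hL := negLogCos_pos hx0 hx.2
  · exact ((hasDerivAt_rpow_neg ((hasDerivAt_id x).const_add c) (by simp only [id]; linarith)).sub
      (hasDerivAt_rpow_neg ((hasDerivAt_id x).const_sub (c + π))
        (by simp only [id]; linarith [hx.2]))).mul
      (((hasDerivAt_negLogCos hx0.le hx.2).const_mul 2).rpow_const (Or.inl (by positivity)))
  · have gap_le := rpow_neg_gap_mul_tan_le hp hp' hc hx.1 hx.2
    rw [← div_le_iff₀ (by positivity)] at gap_le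
    rw [rpow_sub_one (by positivity : 2 * negLogCos x ≠ 0)]
    set G := (2 * negLogCos x) ^ (p / 2)
    have G_nonneg : 0 ≤ G := rpow_nonneg (by positivity) _
    calc _ = p * G * (((c + x) ^ (-p) - (c + π - x) ^ (-p)) * tan x / (2 * negLogCos x))
          - p * G * ((c + x) ^ (-p - 1) + (c + π - x) ^ (-p - 1)) := by field_simp; ring
      _ ≤ 0 := sub_nonpos.2 (mul_le_mul_of_nonneg_left gap_le (mul_nonneg hp G_nonneg))

lemma gaussTail_le_cosTail_iff (hx : 0 < x) (hx' : x < π / 2) :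
    gaussTail p x ≤ cosTail p x ↔ 1 ≤ cosTail p x * (2 * negLogCos x) ^ (p / 2) := by
  have hL := negLogCos_pos hx hx'
  rw [gaussTail, rpow_neg (by positivity),
    inv_le_iff_one_le_mul₀ (rpow_pos_of_pos (by positivity) _)]

lemma gaussTail_le_cosTail_of_le_far (hp : 1 < p) (hp' : p ≤ 2) (hx : 6 / 5 ≤ x) (hxy : x ≤ y)
    (hy : y < π / 2) (h : gaussTail p y ≤ cosTail p y) : gaussTail p x ≤ cosTail p x := by
  have summable {z : ℝ} (hz : 6 / 5 ≤ z) (hz' : z < π / 2) : Summable fun k : ℕ ↦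
      ((k * π + z) ^ (-p) - ((k + 1) * π - z) ^ (-p)) * (2 * negLogCos z) ^ (p / 2) :=
    ((summable_add_rpow_neg hp (by linarith)).sub
      (summable_succ_sub_rpow_neg hp (by linarith))).mul_right _
  rw [gaussTail_le_cosTail_iff (by linarith) (by linarith)] at h ⊢
  refine h.trans ?_
  rw [cosTail, cosTail, ← tsum_mul_right, ← tsum_mul_right]
  refine (summable (hx.trans hxy) hy).tsum_le_tsum (fun k ↦ ?_) (summable hx (by linarith))
  rw [add_one_mul]
  exact antitoneOn_rpow_neg_gap_mul_negLogCos_rpow (by linarith) hp' (by positivity)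
    ⟨hx, by linarith⟩ ⟨hx.trans hxy, hy⟩ hxy

lemma gaussTail_le_cosTail_of_le (hp : 9 / 5 ≤ p) (hp' : p ≤ 2) (hx : 0 < x) (hxy : x ≤ y)
    (hy : y < π / 2) (h : gaussTail p y ≤ cosTail p y) : gaussTail p x ≤ cosTail p x := by
  have near {x y : ℝ} := gaussTail_le_cosTail_of_le_near (x := x) (y := y) hp hp'
  have far {x y : ℝ} := gaussTail_le_cosTail_of_le_far (p := p) (x := x) (y := y)
    (by linarith) hp'
  rcases le_total y (6 / 5) with y_near | y_far
  · exact near hx hxy y_near h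
  rcases le_total x (6 / 5) with x_near | x_far
  · exact near hx x_near le_rfl (far le_rfl y_far hy h)
  · exact far x_far hxy hy h

end Tails

/-! ### Comparison of integrals through distribution functions -/

section LayerCake

lemma integral_mul_abs_one_sub_rpow {s y : ℝ} (hs : 1 ≤ s) (hy0 : 0 ≤ y) (hy1 : y ≤ 1) :
    ∫ t in (0 : ℝ)..y, s * |1 - t| ^ (s - 1) = 1 - (1 - y) ^ s := by
  have hasDerivAt (t : ℝ) : HasDerivAt (fun t ↦ -(1 - t) ^ s) (s * (1 - t) ^ (s - 1)) t := by
    convert! (((hasDerivAt_id t).const_sub 1).rpow_const (p := s) (Or.inr hs)).neg using 1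
    simp
  have continuous : Continuous fun t : ℝ ↦ s * (1 - t) ^ (s - 1) :=
    continuous_const.mul (Continuous.rpow_const (by fun_prop) fun _ ↦ Or.inr (by linarith))
  calc ∫ t in (0 : ℝ)..y, s * |1 - t| ^ (s - 1) = ∫ t in (0 : ℝ)..y, s * (1 - t) ^ (s - 1) := by
        refine intervalIntegral.integral_congr fun t ht ↦ ?_
        rw [Set.uIcc_of_le hy0] at ht
        simp only [abs_of_nonneg (by linarith [ht.2] : 0 ≤ 1 - t)]
    _ = 1 - (1 - y) ^ s := by
        rw [intervalIntegral.integral_eq_sub_of_hasDerivAt (fun t _ ↦ hasDerivAt t)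
          (continuous.intervalIntegrable _ _)]
        simp; ring

lemma lintegral_one_sub_rpow {α : Type*} [MeasurableSpace α] {μ : Measure α} {f : α → ℝ}
    (hf : Measurable f) (h0 : ∀ u, 0 ≤ f u) (h1 : ∀ u, f u ≤ 1) {s : ℝ} (hs : 1 ≤ s) :
    ∫⁻ u, ENNReal.ofReal (1 - (1 - f u) ^ s) ∂μ = ENNReal.ofReal s *
      ∫⁻ t in Set.Ioo 0 1, ENNReal.ofReal ((1 - t) ^ (s - 1)) * μ {u | t < f u} := by
  have continuous : Continuous fun t : ℝ ↦ s * |1 - t| ^ (s - 1) :=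
    continuous_const.mul (Continuous.rpow_const (by fun_prop) fun _ ↦ Or.inr (by linarith))
  have layer_cake := lintegral_comp_eq_lintegral_meas_lt_mul μ (f := f)
    (g := fun t ↦ s * |1 - t| ^ (s - 1)) (ae_of_all _ h0) hf.aemeasurable
    (fun t _ ↦ continuous.intervalIntegrable _ _) (ae_of_all _ fun t ↦ by positivity)
  simp only [integral_mul_abs_one_sub_rpow hs (h0 _) (h1 _)] at layer_cake
  rw [layer_cake, ← lintegral_const_mul' _ _ ENNReal.ofReal_ne_top,
    ← lintegral_indicator measurableSet_Ioi, ← lintegral_indicator measurableSet_Ioo]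
  refine lintegral_congr fun t ↦ ?_
  by_cases ht : t ∈ Set.Ioo (0 : ℝ) 1
  · rw [Set.indicator_of_mem ht, Set.indicator_of_mem (show t ∈ Set.Ioi 0 from ht.1),
      abs_of_nonneg (by linarith [ht.2]), ENNReal.ofReal_mul (by linarith)]
    ring
  · rw [Set.indicator_of_notMem ht]
    refine Set.indicator_apply_eq_zero.2 fun ht0 ↦ ?_
    have one_le : 1 ≤ t := not_lt.1 fun h ↦ ht ⟨ht0, h⟩
    have : {u | t < f u} = ∅ := Set.eq_empty_of_forall_notMem fun u hu ↦
      absurd ((h1 u).trans one_le) (not_le.2 hu)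
    rw [this]; simp

lemma exists_threshold_of_le_of_le {β : Type*} [LinearOrder β] {F G : ℝ → β} {a b : ℝ}
    (hab : a ≤ b)
    (h : ∀ t t', a < t → t ≤ t' → t' < b → G t' ≤ F t' → G t ≤ F t) :
    ∃ t₀ ∈ Set.Icc a b, (∀ t, a < t → t < t₀ → G t ≤ F t) ∧
      ∀ t, t₀ < t → t < b → F t ≤ G t := by
  set S : Set ℝ := insert a {t | a < t ∧ t < b ∧ G t ≤ F t}
  have bddAbove : BddAbove S := ⟨b, by rintro t (rfl | ht); exacts [hab, ht.2.1.le]⟩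
  have a_mem : a ∈ S := Set.mem_insert _ _
  refine ⟨sSup S, ⟨le_csSup bddAbove a_mem, csSup_le ⟨a, a_mem⟩ ?_⟩, fun t hat htS ↦ ?_,
    fun t htS htb ↦ ?_⟩
  · rintro t (rfl | ht)
    exacts [hab, ht.2.1.le]
  · obtain ⟨t', rfl | ht', htt'⟩ := exists_lt_of_lt_csSup ⟨a, a_mem⟩ htS
    · exact absurd htt' hat.not_gt
    · exact h t t' hat htt'.le ht'.2.1 ht'.2.2
  · by_contra! hlt
    have : t ∈ S := Or.inr ⟨(le_csSup bddAbove a_mem).trans_lt htS, htb, hlt.le⟩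
    exact (le_csSup bddAbove this).not_gt htS

lemma mul_add_mul_le_mul_add_mul_of_le {a b c d : ENNReal} (hab : a ≤ b) (hcd : c ≤ d) :
    b * c + a * d ≤ b * d + a * c := by
  obtain ⟨e, rfl⟩ := le_iff_exists_add.1 hab
  obtain ⟨f, rfl⟩ := le_iff_exists_add.1 hcd
  calc (a + e) * c + a * (c + f) ≤ (a + e) * c + a * (c + f) + e * f := le_self_add
    _ = (a + e) * (c + f) + a * c := by ring

lemma lintegral_mul_mono_of_crossing {α : Type*} [MeasurableSpace α] {μ : Measure α}
    {F G d : α → ENNReal} {c : ENNReal} (hF : Measurable F) (hG : Measurable G)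
    (hd : Measurable d) (hc : c ≠ ⊤)
    (hcross : ∀ᵐ a ∂μ, G a ≤ F a ∧ c ≤ d a ∨ F a ≤ G a ∧ d a ≤ c)
    (hfin : ∫⁻ a, G a ∂μ ≠ ⊤) (hle : ∫⁻ a, G a ∂μ ≤ ∫⁻ a, F a ∂μ) :
    ∫⁻ a, d a * G a ∂μ ≤ ∫⁻ a, d a * F a ∂μ := by
  have pointwise : ∀ᵐ a ∂μ, d a * G a + c * F a ≤ d a * F a + c * G a := by
    filter_upwards [hcross] with a ha
    rcases ha with ⟨hGF, hcd⟩ | ⟨hFG, hdc⟩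
    · exact mul_add_mul_le_mul_add_mul_of_le hcd hGF
    · simpa only [add_comm] using mul_add_mul_le_mul_add_mul_of_le hdc hFG
  refine (ENNReal.add_le_add_iff_right (ENNReal.mul_ne_top hc hfin)).1 ?_
  calc ∫⁻ a, d a * G a ∂μ + c * ∫⁻ a, G a ∂μ
      ≤ ∫⁻ a, d a * G a ∂μ + c * ∫⁻ a, F a ∂μ := by gcongr
    _ = ∫⁻ a, (d a * G a + c * F a) ∂μ := by
      rw [lintegral_add_left (by fun_prop : Measurable fun a ↦ d a * G a), lintegral_const_mul _ hF]
    _ ≤ ∫⁻ a, (d a * F a + c * G a) ∂μ := lintegral_mono_ae pointwise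
    _ = ∫⁻ a, d a * F a ∂μ + c * ∫⁻ a, G a ∂μ := by
      rw [lintegral_add_left (by fun_prop : Measurable fun a ↦ d a * F a), lintegral_const_mul _ hG]

lemma measurable_measure_setOf_lt {α : Type*} [MeasurableSpace α] {μ : Measure α} (h : α → ℝ) :
    Measurable fun t ↦ μ {u | t < h u} :=
  Antitone.measurable fun _ _ hab ↦ measure_mono fun _ hu ↦ lt_of_le_of_lt hab hu

lemma setLIntegral_one_sub_rpow_mul (q s : ℝ) (F : ℝ → ENNReal) :
    ∫⁻ t in Set.Ioo 0 1, ENNReal.ofReal ((1 - t) ^ (s - 1)) * F t =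
      ∫⁻ t in Set.Ioo 0 1, ENNReal.ofReal ((1 - t) ^ (s - q)) *
        (ENNReal.ofReal ((1 - t) ^ (q - 1)) * F t) := by
  refine setLIntegral_congr_fun measurableSet_Ioo fun t ht ↦ ?_
  have : 0 < 1 - t := sub_pos.2 ht.2
  simp only [← mul_assoc]
  rw [← ENNReal.ofReal_mul (by positivity), ← rpow_add this, sub_add_sub_cancel]

lemma lintegral_one_sub_rpow_mono_of_crossing {α : Type*} [MeasurableSpace α] {μ : Measure α}
    {f g : α → ℝ} {q s : ℝ} (hf : Measurable f) (hf0 : ∀ u, 0 ≤ f u) (hf1 : ∀ u, f u ≤ 1)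
    (hg : Measurable g) (hg0 : ∀ u, 0 ≤ g u) (hg1 : ∀ u, g u ≤ 1)
    (hcross : ∀ t t' : ℝ, 0 < t → t ≤ t' → t' < 1 → μ {u | t' < g u} ≤ μ {u | t' < f u} →
      μ {u | t < g u} ≤ μ {u | t < f u})
    (hq : 1 ≤ q) (hfin : ∫⁻ u, ENNReal.ofReal (1 - (1 - g u) ^ q) ∂μ ≠ ⊤)
    (hle : ∫⁻ u, ENNReal.ofReal (1 - (1 - g u) ^ q) ∂μ ≤
      ∫⁻ u, ENNReal.ofReal (1 - (1 - f u) ^ q) ∂μ) (hqs : q ≤ s) :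
    ∫⁻ u, ENNReal.ofReal (1 - (1 - g u) ^ s) ∂μ ≤
      ∫⁻ u, ENNReal.ofReal (1 - (1 - f u) ^ s) ∂μ := by
  have ofReal_q : ENNReal.ofReal q ≠ 0 := by simp; linarith
  rw [lintegral_one_sub_rpow hg hg0 hg1 hq] at hfin hle
  rw [lintegral_one_sub_rpow hf hf0 hf1 hq,
    ENNReal.mul_le_mul_iff_right ofReal_q ENNReal.ofReal_ne_top] at hle
  rw [lintegral_one_sub_rpow hf hf0 hf1 (hq.trans hqs),
    lintegral_one_sub_rpow hg hg0 hg1 (hq.trans hqs)]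
  obtain ⟨t₀, ht₀, below, above⟩ := exists_threshold_of_le_of_le zero_le_one hcross
  have measurable_weighted (h : α → ℝ) :
      Measurable fun t ↦ ENNReal.ofReal ((1 - t) ^ (q - 1)) * μ {u | t < h u} :=
    Measurable.mul (by fun_prop) (measurable_measure_setOf_lt h)
  rw [setLIntegral_one_sub_rpow_mul q s, setLIntegral_one_sub_rpow_mul q s]
  refine mul_le_mul_right ?_ _
  refine lintegral_mul_mono_of_crossing (c := ENNReal.ofReal ((1 - t₀) ^ (s - q)))
    (d := fun t ↦ ENNReal.ofReal ((1 - t) ^ (s - q))) (measurable_weighted f)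
    (measurable_weighted g) (by fun_prop) ENNReal.ofReal_ne_top ?_
    (fun h ↦ hfin (by rw [h, ENNReal.mul_top ofReal_q])) hle
  filter_upwards [ae_restrict_mem measurableSet_Ioo, Measure.ae_ne _ t₀] with t ht hne
  have rpow_le {a b : ℝ} (ha : a ≤ 1) (hba : b ≤ a) :
      ENNReal.ofReal ((1 - a) ^ (s - q)) ≤ ENNReal.ofReal ((1 - b) ^ (s - q)) :=
    ENNReal.ofReal_le_ofReal
      (rpow_le_rpow (sub_nonneg.2 ha) (sub_le_sub_left hba 1) (sub_nonneg.2 hqs))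
  rcases lt_or_gt_of_ne hne with h | h
  · exact Or.inl ⟨mul_le_mul_right (below t ht.1 h) _, rpow_le ht₀.2 h.le⟩
  · exact Or.inr ⟨mul_le_mul_right (above t h ht.2) _, rpow_le ht.2.le h.le⟩

end LayerCake

/-! ### Distribution functions of `|cos u|` and `exp (-u ^ 2 / 2)` -/

section PowMeasure

variable {p x : ℝ}

/-- The measure `u ^ (-p - 1) du` on `(0, ∞)`, against which `|a| ^ p` is, up to a constant
depending on `p`, the integral of `1 - cos (a * u)`. -/
noncomputable def powMeasure (p : ℝ) : Measure ℝ :=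
  (volume.restrict (Set.Ioi 0)).withDensity fun u ↦ ENNReal.ofReal (u ^ (-p - 1))

lemma powMeasure_apply (p : ℝ) {s : Set ℝ} (hs : MeasurableSet s) :
    powMeasure p s = ∫⁻ u in s ∩ Set.Ioi 0, ENNReal.ofReal (u ^ (-p - 1)) := by
  rw [powMeasure, withDensity_apply _ hs, Measure.restrict_restrict hs]

lemma powMeasure_inter_Ioi (p : ℝ) {s : Set ℝ} (hs : MeasurableSet s) :
    powMeasure p (s ∩ Set.Ioi 0) = powMeasure p s := by
  rw [powMeasure_apply p hs, powMeasure_apply p (hs.inter measurableSet_Ioi), Set.inter_assoc,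
    Set.inter_self]

lemma powMeasure_Ioi {a : ℝ} (hp : 0 < p) (ha : 0 < a) :
    powMeasure p (Set.Ioi a) = ENNReal.ofReal (a ^ (-p) / p) := by
  rw [powMeasure_apply p measurableSet_Ioi,
    Set.inter_eq_left.2 (Set.Ioi_subset_Ioi ha.le),
    ← ofReal_integral_eq_lintegral_ofReal (integrableOn_Ioi_rpow_of_lt (by linarith) ha),
    integral_Ioi_rpow_of_lt (by linarith) ha, sub_add_cancel, neg_div_neg_eq]
  filter_upwards [ae_restrict_mem measurableSet_Ioi] with u hu
  exact rpow_nonneg (ha.trans hu).le _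

lemma powMeasure_Ioo {a b : ℝ} (hp : 0 < p) (ha : 0 < a) (hab : a ≤ b) :
    powMeasure p (Set.Ioo a b) = ENNReal.ofReal (a ^ (-p) / p - b ^ (-p) / p) := by
  have diff : Set.Ioi a \ Set.Ioi b = Set.Ioc a b := by ext; simp
  have Ioc_eq_Ioo : powMeasure p (Set.Ioo a b) = powMeasure p (Set.Ioc a b) :=
    measure_congr ((withDensity_absolutelyContinuous _ _).trans
      Measure.absolutelyContinuous_restrict |>.ae_eq Ioo_ae_eq_Ioc)
  rw [Ioc_eq_Ioo, ← diff,
    measure_sdiff (Set.Ioi_subset_Ioi hab) measurableSet_Ioi.nullMeasurableSet,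
    powMeasure_Ioi hp ha, powMeasure_Ioi hp (ha.trans_le hab), ENNReal.ofReal_sub]
  · have := ha.trans_le hab
    positivity
  · rw [powMeasure_Ioi hp (ha.trans_le hab)]
    exact ENNReal.ofReal_ne_top

lemma abs_cos_lt_cos_iff {v : ℝ} (hx : x ∈ Set.Icc 0 π) (hv : v ∈ Set.Icc 0 π) :
    |cos v| < cos x ↔ v ∈ Set.Ioo x (π - x) := by
  have hx' : π - x ∈ Set.Icc 0 π := ⟨sub_nonneg.2 hx.2, sub_le_self _ hx.1⟩
  rw [abs_lt, ← cos_pi_sub, strictAntiOn_cos.lt_iff_gt hx' hv, strictAntiOn_cos.lt_iff_gt hv hx]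
  exact and_comm

lemma abs_cos_sub_nat_mul_pi (u : ℝ) (k : ℕ) : |cos (u - k * π)| = |cos u| := by
  simp [cos_sub_nat_mul_pi, abs_mul]

lemma setOf_abs_cos_lt_inter_Ioi (hx : 0 < x) (hx' : x < π) :
    {u | |cos u| < cos x} ∩ Set.Ioi 0 = ⋃ k : ℕ, Set.Ioo (k * π + x) ((k + 1) * π - x) := by
  have mem_Icc : x ∈ Set.Icc 0 π := ⟨hx.le, hx'.le⟩
  ext u
  simp only [Set.mem_inter_iff, Set.mem_ofPred_eq, Set.mem_Ioi, Set.mem_iUnion, Set.mem_Ioo]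
  constructor
  · rintro ⟨h, hu⟩
    have floor_le := Nat.floor_le (div_nonneg hu.le pi_pos.le)
    have lt_floor := Nat.lt_floor_add_one (u / π)
    rw [le_div_iff₀ pi_pos] at floor_le
    rw [div_lt_iff₀ pi_pos] at lt_floor
    refine ⟨⌊u / π⌋₊, ?_⟩
    rw [← abs_cos_sub_nat_mul_pi u ⌊u / π⌋₊,
      abs_cos_lt_cos_iff mem_Icc ⟨by linarith, by linarith⟩] at h
    constructor <;> linarith [h.1, h.2]
  · rintro ⟨k, left, right⟩
    have : 0 ≤ k * π := by positivity
    refine ⟨?_, by linarith⟩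
    rw [← abs_cos_sub_nat_mul_pi u k, abs_cos_lt_cos_iff mem_Icc ⟨by linarith, by linarith⟩]
    constructor <;> linarith

lemma pairwise_disjoint_Ioo_nat_mul_pi (hx : 0 ≤ x) :
    Pairwise (Function.onFun Disjoint fun k : ℕ ↦ Set.Ioo (k * π + x) ((k + 1) * π - x)) := by
  refine (pairwise_disjoint_on _).2 fun j k hjk ↦ Set.disjoint_left.2 fun u hj hk ↦ ?_
  have : ((j + 1 : ℕ) : ℝ) * π ≤ k * π := by gcongr; exact hjk
  push_cast at this
  linarith [hj.2, hk.1]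

lemma powMeasure_abs_cos_lt (hp : 1 < p) (hx : 0 < x) (hx' : x < π / 2) :
    powMeasure p {u | |cos u| < cos x} = ENNReal.ofReal (cosTail p x / p) := by
  have x_lt_pi : x < π := by linarith
  have gap (k : ℕ) : 0 < k * π + x ∧ k * π + x ≤ (k + 1) * π - x :=
    ⟨by positivity, by linarith⟩
  have gap_mass_nonneg (k : ℕ) : 0 ≤ ((k * π + x) ^ (-p) - ((k + 1) * π - x) ^ (-p)) / p :=
    div_nonneg (sub_nonneg.2 (rpow_le_rpow_of_nonpos (gap k).1 (gap k).2 (by linarith)))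
      (by linarith)
  rw [← powMeasure_inter_Ioi p (measurableSet_lt (by fun_prop) measurable_const),
    setOf_abs_cos_lt_inter_Ioi hx x_lt_pi,
    measure_iUnion (pairwise_disjoint_Ioo_nat_mul_pi hx.le) fun _ ↦ measurableSet_Ioo,
    cosTail, ← tsum_div_const, ENNReal.ofReal_tsum_of_nonneg gap_mass_nonneg
      (((summable_add_rpow_neg hp hx).sub (summable_succ_sub_rpow_neg hp x_lt_pi)).div_const p)]
  exact tsum_congr fun k ↦ by
    rw [powMeasure_Ioo (by linarith) (gap k).1 (gap k).2, ← sub_div]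

lemma powMeasure_gauss_lt (hp : 0 < p) (hx : 0 < x) (hx' : x < π / 2) :
    powMeasure p {u | exp (-u ^ 2 / 2) < cos x} = ENNReal.ofReal (gaussTail p x / p) := by
  have hL := negLogCos_pos hx hx'
  have setOf_eq : {u | exp (-u ^ 2 / 2) < cos x} ∩ Set.Ioi 0 = Set.Ioi √(2 * negLogCos x) := by
    ext u
    have log_cos : log (cos x) = -negLogCos x := (neg_neg _).symm
    simp only [Set.mem_inter_iff, Set.mem_ofPred_eq, Set.mem_Ioi]
    rw [← lt_log_iff_exp_lt (cos_pos_of_lt hx.le hx'), log_cos]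
    constructor
    · rintro ⟨h, hu⟩
      rw [sqrt_lt' hu]; linarith
    · intro h
      have hu := (sqrt_nonneg _).trans_lt h
      rw [sqrt_lt' hu] at h
      exact ⟨by linarith, hu⟩
  rw [← powMeasure_inter_Ioi p (measurableSet_lt (by fun_prop) measurable_const), setOf_eq,
    powMeasure_Ioi hp (by positivity), gaussTail, sqrt_eq_rpow, ← rpow_mul (by positivity)]
  congr 3; ring

lemma powMeasure_lt_one_sub_abs_cos {t : ℝ} (hp : 1 < p) (ht : 0 < t) (ht' : t < 1) :
    powMeasure p {u | t < 1 - |cos u|} = ENNReal.ofReal (cosTail p (arccos (1 - t)) / p) := by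
  rw [← powMeasure_abs_cos_lt hp (arccos_pos.2 (by linarith))
    (arccos_lt_pi_div_two.2 (by linarith)), cos_arccos (by linarith) (by linarith)]
  simp only [lt_sub_comm]

lemma powMeasure_lt_one_sub_gauss {t : ℝ} (hp : 0 < p) (ht : 0 < t) (ht' : t < 1) :
    powMeasure p {u | t < 1 - exp (-u ^ 2 / 2)} =
      ENNReal.ofReal (gaussTail p (arccos (1 - t)) / p) := by
  rw [← powMeasure_gauss_lt hp (arccos_pos.2 (by linarith))
    (arccos_lt_pi_div_two.2 (by linarith)), cos_arccos (by linarith) (by linarith)]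
  simp only [lt_sub_comm]

lemma powMeasure_gauss_le_powMeasure_cos_of_le {t t' : ℝ} (hp : 9 / 5 ≤ p) (hp' : p ≤ 2)
    (ht : 0 < t) (htt' : t ≤ t') (ht' : t' < 1)
    (h : powMeasure p {u | t' < 1 - exp (-u ^ 2 / 2)} ≤ powMeasure p {u | t' < 1 - |cos u|}) :
    powMeasure p {u | t < 1 - exp (-u ^ 2 / 2)} ≤ powMeasure p {u | t < 1 - |cos u|} := by
  have hp0 : 0 < p := by linarith
  have hp1 : 1 < p := by linarith
  have arccos_pos : 0 < arccos (1 - t) := arccos_pos.2 (by linarith)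
  have arccos_lt : arccos (1 - t') < π / 2 := arccos_lt_pi_div_two.2 (by linarith)
  have arccos_le : arccos (1 - t) ≤ arccos (1 - t') := arccos_le_arccos (by linarith)
  have gaussTail_pos : 0 < gaussTail p (arccos (1 - t')) :=
    rpow_pos_of_pos (mul_pos two_pos (negLogCos_pos (arccos_pos.trans_le arccos_le) arccos_lt)) _
  rw [powMeasure_lt_one_sub_gauss hp0 (ht.trans_le htt') ht',
    powMeasure_lt_one_sub_abs_cos hp1 (ht.trans_le htt') ht', ENNReal.ofReal_le_ofReal_iff',
    or_iff_left (not_le.2 (by positivity)), div_le_div_iff_of_pos_right hp0] at h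
  rw [powMeasure_lt_one_sub_gauss hp0 ht (htt'.trans_lt ht'),
    powMeasure_lt_one_sub_abs_cos hp1 ht (htt'.trans_lt ht')]
  gcongr
  exact gaussTail_le_cosTail_of_le hp hp' arccos_pos arccos_le arccos_lt h

lemma lintegral_one_sub_gauss_rpow_le {s : ℝ} (hp : 9 / 5 ≤ p) (hp' : p ≤ 2)
    (hfin : ∫⁻ u, ENNReal.ofReal (1 - exp (-u ^ 2 / 2) ^ (2 : ℝ)) ∂powMeasure p ≠ ⊤)
    (h : ∫⁻ u, ENNReal.ofReal (1 - exp (-u ^ 2 / 2) ^ (2 : ℝ)) ∂powMeasure p ≤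
      ∫⁻ u, ENNReal.ofReal (1 - |cos u| ^ (2 : ℝ)) ∂powMeasure p) (hs : 2 ≤ s) :
    ∫⁻ u, ENNReal.ofReal (1 - exp (-u ^ 2 / 2) ^ s) ∂powMeasure p ≤
      ∫⁻ u, ENNReal.ofReal (1 - |cos u| ^ s) ∂powMeasure p := by
  simpa using lintegral_one_sub_rpow_mono_of_crossing (μ := powMeasure p)
    (f := fun u ↦ 1 - |cos u|) (g := fun u ↦ 1 - exp (-u ^ 2 / 2))
    (by fun_prop) (fun u ↦ sub_nonneg.2 (abs_cos_le_one u))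
    (fun u ↦ sub_le_self _ (abs_nonneg _)) (by fun_prop)
    (fun u ↦ sub_nonneg.2 (exp_le_one_iff.2 (by linarith [sq_nonneg u])))
    (fun u ↦ sub_le_self _ (exp_pos _).le)
    (fun _ _ ↦ powMeasure_gauss_le_powMeasure_cos_of_le hp hp') one_le_two
    (by simpa using hfin) (by simpa using h) hs

end PowMeasure

/-! ### The integral representation of `|a| ^ p` -/

section IntegralRepresentation

open ProbabilityTheory

variable {p s : ℝ}

instance (p : ℝ) : SFinite (powMeasure p) := by unfold powMeasure; infer_instance

lemma lintegral_powMeasure (p : ℝ) {f : ℝ → ENNReal} (hf : Measurable f) :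
    ∫⁻ u, f u ∂powMeasure p = ∫⁻ u in Set.Ioi 0, ENNReal.ofReal (u ^ (-p - 1)) * f u :=
  lintegral_withDensity_eq_lintegral_mul _ (by fun_prop) hf

lemma lintegral_powMeasure_comp_mul (p : ℝ) {f : ℝ → ENNReal} (hf : Measurable f) {a : ℝ}
    (ha : 0 < a) :
    ∫⁻ u, f (a * u) ∂powMeasure p = ENNReal.ofReal (a ^ p) * ∫⁻ u, f u ∂powMeasure p := by
  have image_mul : (a * ·) '' Set.Ioi 0 = Set.Ioi 0 := by rw [Set.image_mul_left_Ioi ha, mul_zero]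
  have change_var := lintegral_image_eq_lintegral_abs_deriv_mul (measurableSet_Ioi (a := (0 : ℝ)))
    (fun u _ ↦ ((hasDerivAt_id u).const_mul a).hasDerivWithinAt)
    (mul_right_injective₀ ha.ne').injOn fun u ↦ ENNReal.ofReal (u ^ (-p - 1)) * f u
  rw [lintegral_powMeasure p hf, lintegral_powMeasure p (f := fun u ↦ f (a * u)) (by fun_prop)]
  simp only [id_eq, image_mul] at change_var
  rw [change_var, ← lintegral_const_mul' _ _ ENNReal.ofReal_ne_top]
  refine setLIntegral_congr_fun measurableSet_Ioi fun u hu ↦ ?_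
  have hu0 : 0 < u := hu
  simp only [← mul_assoc]
  rw [← ENNReal.ofReal_mul (by positivity), ← ENNReal.ofReal_mul (by positivity)]
  congr 2
  rw [mul_one, abs_of_pos ha, mul_rpow ha.le hu0.le, rpow_sub_one ha.ne', rpow_neg ha.le]
  field_simp

/-- The integral of `1 - cos u` against `u ^ (-p - 1) du` on `(0, ∞)`, the constant in the integral
representation of `|a| ^ p`. Its value is never needed, only that it is positive and finite for
`0 < p < 2`. -/
noncomputable def cosConst (p : ℝ) : ENNReal := ∫⁻ u, ENNReal.ofReal (1 - cos u) ∂powMeasure p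

lemma cosConst_ne_zero (hp : 0 < p) : cosConst p ≠ 0 := by
  have le_cosConst : powMeasure p (Set.Ioo (π / 2) π) ≤ cosConst p := by
    rw [← setLIntegral_one]
    refine (setLIntegral_mono' measurableSet_Ioo fun u hu ↦ ?_).trans
      (setLIntegral_le_lintegral _ _)
    rw [ENNReal.one_le_ofReal, le_sub_self_iff]
    exact cos_nonpos_of_pi_div_two_le_of_le hu.1.le (by linarith [hu.2, pi_pos])
  rw [powMeasure_Ioo hp (by positivity) (by linarith [pi_pos])] at le_cosConst
  refine (lt_of_lt_of_le (ENNReal.ofReal_pos.2 (sub_pos.2 ?_)) le_cosConst).ne'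
  gcongr ?_ / p
  exact rpow_lt_rpow_of_neg (by positivity) (by linarith [pi_pos]) (by linarith)

lemma setLIntegral_one_sub_cos_Ioc_ne_top (hp : p < 2) :
    ∫⁻ u in Set.Ioc 0 1, ENNReal.ofReal (u ^ (-p - 1)) * ENNReal.ofReal (1 - cos u) ≠ ⊤ := by
  have integrable : IntegrableOn (fun u : ℝ ↦ u ^ (1 - p)) (Set.Ioc 0 1) :=
    (intervalIntegral.intervalIntegrable_rpow' (by linarith)).1
  refine ne_top_of_le_ne_top (Integrable.lintegral_lt_top integrable).ne
    (setLIntegral_mono' measurableSet_Ioc fun u hu ↦ ?_)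
  have hu0 := hu.1
  rw [← ENNReal.ofReal_mul (by positivity)]
  refine ENNReal.ofReal_le_ofReal ?_
  calc u ^ (-p - 1) * (1 - cos u) ≤ u ^ (-p - 1) * u ^ (2 : ℝ) := by
        gcongr
        rw [rpow_two]
        nlinarith [one_sub_sq_div_two_le_cos (x := u)]
    _ = u ^ (1 - p) := by rw [← rpow_add hu0]; congr 1; ring

lemma setLIntegral_one_sub_cos_Ioi_ne_top (hp : 0 < p) :
    ∫⁻ u in Set.Ioi 1, ENNReal.ofReal (u ^ (-p - 1)) * ENNReal.ofReal (1 - cos u) ≠ ⊤ := by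
  have integrable : IntegrableOn (fun u : ℝ ↦ u ^ (-p - 1) * 2) (Set.Ioi 1) :=
    (integrableOn_Ioi_rpow_of_lt (by linarith) one_pos).mul_const 2
  refine ne_top_of_le_ne_top (Integrable.lintegral_lt_top integrable).ne
    (setLIntegral_mono' measurableSet_Ioi fun u hu ↦ ?_)
  have hu0 : (0 : ℝ) < u := one_pos.trans hu
  rw [← ENNReal.ofReal_mul (by positivity)]
  gcongr
  linarith [neg_one_le_cos u]

lemma cosConst_ne_top (hp : 0 < p) (hp' : p < 2) : cosConst p ≠ ⊤ := by
  rw [cosConst, lintegral_powMeasure p (by fun_prop), ← Set.Ioc_union_Ioi_eq_Ioi zero_le_one]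
  exact ne_top_of_le_ne_top (ENNReal.add_ne_top.2
    ⟨setLIntegral_one_sub_cos_Ioc_ne_top hp', setLIntegral_one_sub_cos_Ioi_ne_top hp⟩)
    (lintegral_union_le _ _ _)

lemma lintegral_one_sub_cos_mul (hp : p ≠ 0) (a : ℝ) :
    ∫⁻ u, ENNReal.ofReal (1 - cos (a * u)) ∂powMeasure p =
      ENNReal.ofReal (|a| ^ p) * cosConst p := by
  rcases eq_or_ne a 0 with rfl | ha
  · simp [zero_rpow hp]
  · have cos_abs_mul (u : ℝ) : cos (a * u) = cos (|a| * u) := by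
      rcases abs_choice a with h | h <;> simp [h]
    simp only [cos_abs_mul]
    exact lintegral_powMeasure_comp_mul p (f := fun u ↦ ENNReal.ofReal (1 - cos u)) (by fun_prop)
      (abs_pos.2 ha)

lemma lintegral_one_sub_abs_cos_sq (hp : p ≠ 0) :
    ∫⁻ u, ENNReal.ofReal (1 - |cos u| ^ (2 : ℝ)) ∂powMeasure p =
      ENNReal.ofReal (2 ^ (p - 1)) * cosConst p := by
  have double_angle (u : ℝ) : ENNReal.ofReal (1 - |cos u| ^ (2 : ℝ)) =
      ENNReal.ofReal (1 / 2) * ENNReal.ofReal (1 - cos (2 * u)) := by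
    rw [← ENNReal.ofReal_mul (by positivity), rpow_two, sq_abs, cos_sq]
    congr 1; ring
  simp only [double_angle]
  rw [lintegral_const_mul _ (by fun_prop), lintegral_one_sub_cos_mul hp, ← mul_assoc,
    ← ENNReal.ofReal_mul (by positivity), rpow_sub_one two_ne_zero, abs_two, one_div_mul_eq_div]

/-- The `p`-th absolute moment of a standard Gaussian variable, in closed form. -/
noncomputable def gaussMoment (p : ℝ) : ℝ := 2 ^ (p / 2) * Gamma ((p + 1) / 2) / √π

lemma gaussMoment_pos (hp : -1 < p) : 0 < gaussMoment p := by
  have := Gamma_pos_of_pos (by linarith : 0 < (p + 1) / 2)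
  unfold gaussMoment; positivity

lemma integral_gaussianReal_abs_rpow (hp : -1 < p) :
    ∫ x, |x| ^ p ∂gaussianReal 0 1 = gaussMoment p := by
  have pdf_smul (x : ℝ) : gaussianPDFReal 0 1 x • |x| ^ p =
      (√(2 * π))⁻¹ * (|x| ^ p * exp (-(1 / 2) * |x| ^ (2 : ℝ))) := by
    have : -(1 / 2) * x ^ 2 = -x ^ 2 / 2 := by ring
    simp only [gaussianPDFReal, NNReal.coe_one, mul_one, sub_zero, rpow_two, sq_abs, this,
      smul_eq_mul]
    ring
  have half_rpow : (1 / 2 : ℝ) ^ (-(p + 1) / 2) = 2 ^ (p / 2) * √2 := by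
    rw [one_div, inv_rpow zero_le_two, ← rpow_neg zero_le_two, sqrt_eq_rpow, ← rpow_add two_pos]
    congr 1; ring
  rw [integral_gaussianReal_eq_integral_smul one_ne_zero]
  simp only [pdf_smul]
  rw [integral_const_mul,
    integral_comp_abs (f := fun x : ℝ ↦ x ^ p * exp (-(1 / 2) * x ^ (2 : ℝ))),
    integral_rpow_mul_exp_neg_mul_rpow two_pos hp one_half_pos, half_rpow, gaussMoment,
    sqrt_mul zero_le_two]
  field_simp

lemma lintegral_gaussianReal_abs_rpow (hp : 0 ≤ p) :
    ∫⁻ x, ENNReal.ofReal (|x| ^ p) ∂gaussianReal 0 1 = ENNReal.ofReal (gaussMoment p) := by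
  have integrable : Integrable (fun x : ℝ ↦ |x| ^ p) (gaussianReal 0 1) := by
    simpa [coe_toNNReal p hp] using (memLp_id_gaussianReal p.toNNReal).integrable_norm_rpow'
  rw [← integral_gaussianReal_abs_rpow (by linarith),
    ofReal_integral_eq_lintegral_ofReal integrable (ae_of_all _ fun x ↦ by positivity)]

lemma integral_gaussianReal_cos_mul (t : ℝ) :
    ∫ x, cos (t * x) ∂gaussianReal 0 1 = exp (-t ^ 2 / 2) := by
  have integrable : Integrable (fun x : ℝ ↦ Complex.exp (t * x * Complex.I)) (gaussianReal 0 1) :=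
    Integrable.of_bound (by fun_prop) 1 (ae_of_all _ fun x ↦ by
      rw [← Complex.ofReal_mul, Complex.norm_exp_ofReal_mul_I])
  calc ∫ x, cos (t * x) ∂gaussianReal 0 1
      = ∫ x : ℝ, RCLike.re (Complex.exp (t * x * Complex.I)) ∂gaussianReal 0 1 := by
        simp [← Complex.ofReal_mul, Complex.exp_ofReal_mul_I_re]
    _ = RCLike.re (charFun (gaussianReal 0 1) t) := by
        rw [integral_re integrable, charFun_apply_real]
    _ = exp (-t ^ 2 / 2) := by
        have : (t * (0 : ℝ) * Complex.I - (1 : NNReal) * t ^ 2 / 2 : ℂ) =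
            ((-t ^ 2 / 2 : ℝ) : ℂ) := by
          push_cast; ring
        rw [charFun_gaussianReal, this, RCLike.re_eq_complex_re, Complex.exp_ofReal_re]

lemma lintegral_gaussianReal_one_sub_cos_mul (t : ℝ) :
    ∫⁻ x, ENNReal.ofReal (1 - cos (x * t)) ∂gaussianReal 0 1 =
      ENNReal.ofReal (1 - exp (-t ^ 2 / 2)) := by
  have integrable : Integrable (fun x ↦ cos (t * x)) (gaussianReal 0 1) :=
    Integrable.of_bound (by fun_prop) 1 (ae_of_all _ fun x ↦ abs_cos_le_one _)
  simp only [mul_comm _ t]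
  rw [← ofReal_integral_eq_lintegral_ofReal (f := fun x ↦ 1 - cos (t * x))
    ((integrable_const 1).sub integrable)
    (ae_of_all _ fun x ↦ sub_nonneg.2 (cos_le_one _)),
    integral_sub (integrable_const 1) integrable, integral_gaussianReal_cos_mul]
  simp

lemma lintegral_one_sub_gauss (hp : 0 < p) :
    ∫⁻ u, ENNReal.ofReal (1 - exp (-u ^ 2 / 2)) ∂powMeasure p =
      ENNReal.ofReal (gaussMoment p) * cosConst p := by
  simp only [← lintegral_gaussianReal_one_sub_cos_mul]
  rw [lintegral_lintegral_swap (by fun_prop)]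
  simp only [lintegral_one_sub_cos_mul hp.ne']
  rw [lintegral_mul_const _ (by fun_prop), lintegral_gaussianReal_abs_rpow hp.le]

lemma lintegral_one_sub_gauss_rpow (hp : 0 < p) (hs : 0 < s) :
    ∫⁻ u, ENNReal.ofReal (1 - exp (-u ^ 2 / 2) ^ s) ∂powMeasure p =
      ENNReal.ofReal (s ^ (p / 2) * gaussMoment p) * cosConst p := by
  have rescale (u : ℝ) : exp (-u ^ 2 / 2) ^ s = exp (-(√s * u) ^ 2 / 2) := by
    rw [← exp_mul, mul_pow, sq_sqrt hs.le]
    congr 1; ring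
  have sqrt_rpow : √s ^ p = s ^ (p / 2) := by
    rw [sqrt_eq_rpow, ← rpow_mul hs.le, one_div_mul_eq_div]
  simp only [rescale]
  rw [lintegral_powMeasure_comp_mul p (f := fun u ↦ ENNReal.ofReal (1 - exp (-u ^ 2 / 2)))
    (by fun_prop) (sqrt_pos.2 hs), lintegral_one_sub_gauss hp, ← mul_assoc,
    ← ENNReal.ofReal_mul (by positivity), sqrt_rpow]

lemma gaussMoment_mul_cosConst_le_lintegral (hp : 9 / 5 ≤ p) (hp' : p < 2)
    (hC : gaussMoment p ≤ 2 ^ (p / 2 - 1)) (hs : 2 ≤ s) :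
    ENNReal.ofReal (s ^ (p / 2) * gaussMoment p) * cosConst p ≤
      ∫⁻ u, ENNReal.ofReal (1 - |cos u| ^ s) ∂powMeasure p := by
  have hp0 : 0 < p := by linarith
  rw [← lintegral_one_sub_gauss_rpow hp0 (by linarith)]
  refine lintegral_one_sub_gauss_rpow_le hp hp'.le ?_ ?_ hs <;>
    rw [lintegral_one_sub_gauss_rpow hp0 two_pos]
  · exact ENNReal.mul_ne_top ENNReal.ofReal_ne_top (cosConst_ne_top hp0 hp')
  · rw [lintegral_one_sub_abs_cos_sq hp0.ne']
    gcongr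
    calc (2 : ℝ) ^ (p / 2) * gaussMoment p ≤ 2 ^ (p / 2) * 2 ^ (p / 2 - 1) := by gcongr
      _ = 2 ^ (p - 1) := by rw [← rpow_add two_pos]; congr 1; ring

end IntegralRepresentation

/-! ### Averages over signs -/

/-- The average of `f (c ± a₁ ± ⋯ ± aₙ)` over all choices of signs, where `[a₁, …, aₙ]` is the list
argument. It is the expectation of `f` at a Rademacher sum, set up so that the recursion on the
list conditions on the first sign. -/
noncomputable def signMean {V : Type*} [AddCommGroup V] (f : V → ℝ) : V → List V → ℝ
  | c, [] => f c
  | c, a :: l => (signMean f (c + a) l + signMean f (c - a) l) / 2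

section SignMean

variable {V W : Type*} [AddCommGroup V] [AddCommGroup W] {f g : V → ℝ}

lemma signMean_nil (f : V → ℝ) (c : V) : signMean f c [] = f c := rfl

lemma signMean_cons (f : V → ℝ) (c a : V) (l : List V) :
    signMean f c (a :: l) = (signMean f (c + a) l + signMean f (c - a) l) / 2 := rfl

lemma signMean_mono (h : ∀ x, f x ≤ g x) (c : V) (l : List V) :
    signMean f c l ≤ signMean g c l := by
  induction l generalizing c with
  | nil => exact h c
  | cons a l ih => rw [signMean_cons, signMean_cons]; linarith [ih (c + a), ih (c - a)]

lemma signMean_const (b : ℝ) (c : V) (l : List V) : signMean (fun _ ↦ b) c l = b := by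
  induction l generalizing c with
  | nil => rfl
  | cons a l ih => rw [signMean_cons, ih, ih]; ring

lemma signMean_nonneg (h : ∀ x, 0 ≤ f x) (c : V) (l : List V) : 0 ≤ signMean f c l :=
  (signMean_const 0 c l).ge.trans (signMean_mono h c l)

lemma signMean_one_sub (f : V → ℝ) (c : V) (l : List V) :
    signMean (fun x ↦ 1 - f x) c l = 1 - signMean f c l := by
  induction l generalizing c with
  | nil => rfl
  | cons a l ih => rw [signMean_cons, signMean_cons, ih, ih]; ring

lemma signMean_sum {ι : Type*} (s : Finset ι) (f : ι → V → ℝ) (c : V) (l : List V) :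
    signMean (fun v ↦ ∑ i ∈ s, f i v) c l = ∑ i ∈ s, signMean (f i) c l := by
  induction l generalizing c with
  | nil => rfl
  | cons a l ih => simp only [signMean_cons, ih, ← Finset.sum_add_distrib, Finset.sum_div]

lemma signMean_map (φ : V →+ W) (f : W → ℝ) (c : V) (l : List V) :
    signMean f (φ c) (l.map φ) = signMean (fun v ↦ f (φ v)) c l := by
  induction l generalizing c with
  | nil => rfl
  | cons a l ih => rw [List.map_cons, signMean_cons, signMean_cons, ← map_add, ← map_sub, ih, ih]

lemma signMean_perm (f : V → ℝ) (c : V) {l l' : List V} (h : l.Perm l') :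
    signMean f c l = signMean f c l' := by
  induction h generalizing c with
  | nil => rfl
  | cons a _ ih => rw [signMean_cons, signMean_cons, ih, ih]
  | swap a b l =>
    simp only [signMean_cons]
    rw [add_right_comm c b a, sub_right_comm c b a, add_sub_right_comm c b a,
      sub_add_eq_add_sub c b a]
    ring
  | trans _ _ ih ih' => rw [ih, ih']

lemma signMean_merge (f : V → ℝ) (c a b : V) (l : List V) :
    signMean f c (a :: b :: l) =
      (signMean f c ((a + b) :: l) + signMean f c ((a - b) :: l)) / 2 := by
  have add_sub : c + a - b = c + (a - b) := by abel
  have sub_add : c - a + b = c - (a - b) := by abel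
  have sub_sub : c - a - b = c - (a + b) := by abel
  simp only [signMean_cons, add_assoc, add_sub, sub_add, sub_sub]
  ring

lemma signMean_neg (hf : ∀ x, f (-x) = f x) (c : V) (l : List V) :
    signMean f (-c) l = signMean f c l := by
  induction l generalizing c with
  | nil => exact hf c
  | cons a l ih =>
    rw [signMean_cons, signMean_cons, ← ih (c + a), ← ih (c - a), neg_add, neg_sub',
      ← sub_eq_add_neg, add_comm, sub_neg_eq_add]

lemma signMean_zero_cons (hf : ∀ x, f (-x) = f x) (a : V) (l : List V) :
    signMean f 0 (a :: l) = signMean f a l := by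
  rw [signMean_cons, zero_add, zero_sub, signMean_neg hf, add_self_div_two]

lemma signMean_rpow_mul_rpow_le (hf : ∀ x, 0 ≤ f x) (hg : ∀ x, 0 ≤ g x) {θ : ℝ} (hθ : 0 < θ)
    (hθ' : θ < 1) (c : V) (l : List V) :
    signMean (fun x ↦ f x ^ θ * g x ^ (1 - θ)) c l ≤
      signMean f c l ^ θ * signMean g c l ^ (1 - θ) := by
  induction l generalizing c with
  | nil => rfl
  | cons a l ih =>
    have hθ₁ : 0 < 1 - θ := sub_pos.2 hθ'
    set x := ![signMean f (c + a) l, signMean f (c - a) l]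
    set y := ![signMean g (c + a) l, signMean g (c - a) l]
    have x_nonneg : ∀ i, 0 ≤ x i := Fin.forall_fin_two.2 ⟨signMean_nonneg hf _ l,
      signMean_nonneg hf _ l⟩
    have y_nonneg : ∀ i, 0 ≤ y i := Fin.forall_fin_two.2 ⟨signMean_nonneg hg _ l,
      signMean_nonneg hg _ l⟩
    have holder := inner_le_Lp_mul_Lq_of_nonneg Finset.univ (f := fun i ↦ x i ^ θ)
      (g := fun i ↦ y i ^ (1 - θ)) (Real.HolderConjugate.inv_one_sub_inv hθ hθ')
      (fun i _ ↦ rpow_nonneg (x_nonneg i) _) (fun i _ ↦ rpow_nonneg (y_nonneg i) _)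
    simp only [rpow_rpow_inv (x_nonneg _) hθ.ne', rpow_rpow_inv (y_nonneg _) hθ₁.ne', one_div,
      inv_inv, Fin.sum_univ_two] at holder
    have x_sum := add_nonneg (x_nonneg 0) (x_nonneg 1)
    have y_sum := add_nonneg (y_nonneg 0) (y_nonneg 1)
    have halve : ((x 0 + x 1) / 2) ^ θ * ((y 0 + y 1) / 2) ^ (1 - θ) =
        (x 0 + x 1) ^ θ * (y 0 + y 1) ^ (1 - θ) / 2 := by
      rw [div_rpow x_sum zero_le_two, div_rpow y_sum zero_le_two, div_mul_div_comm,
        ← rpow_add two_pos, add_sub_cancel, rpow_one]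
    calc _ ≤ (x 0 ^ θ * y 0 ^ (1 - θ) + x 1 ^ θ * y 1 ^ (1 - θ)) / 2 :=
          div_le_div_of_nonneg_right (add_le_add (ih _) (ih _)) zero_le_two
      _ ≤ (x 0 + x 1) ^ θ * (y 0 + y 1) ^ (1 - θ) / 2 := by gcongr
      _ = _ := halve.symm

lemma exists_signMean_le [Module ℝ V] (f : V → ℝ) (c : V) {n : ℕ} (a : Fin n → V) :
    ∃ y : Fin n → ℝ, (∀ j, |y j| ≤ 1) ∧ signMean f c (List.ofFn a) ≤ f (c + ∑ j, y j • a j) := by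
  induction n generalizing c with
  | zero => exact ⟨0, fun j ↦ j.elim0, by simp [signMean_nil]⟩
  | succ n ih =>
    set tailMean : ℝ → ℝ := fun s ↦ signMean f (c + s • a 0) (List.ofFn fun j ↦ a j.succ)
    have mean_eq : signMean f c (List.ofFn a) = (tailMean 1 + tailMean (-1)) / 2 := by
      simp only [tailMean, List.ofFn_succ, signMean_cons, one_smul, neg_smul, sub_eq_add_neg]
    obtain ⟨s, hs, mean_le⟩ : ∃ s : ℝ, |s| ≤ 1 ∧ signMean f c (List.ofFn a) ≤ tailMean s := by
      rcases le_total (tailMean 1) (tailMean (-1)) with h | h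
      · exact ⟨-1, by simp, by linarith⟩
      · exact ⟨1, by simp, by linarith⟩
    obtain ⟨y, hy, tail_le⟩ := ih (c + s • a 0) fun j ↦ a j.succ
    refine ⟨Fin.cons s y, Fin.cases hs hy, mean_le.trans ?_⟩
    simpa [Fin.sum_univ_succ, add_assoc] using tail_le

section Integral

variable {α : Type*} [MeasurableSpace α] {F : V → α → ℝ}

lemma measurable_signMean (hF : ∀ a, Measurable (F a)) (c : V) (l : List V) :
    Measurable fun t ↦ signMean (fun a ↦ F a t) c l := by
  induction l generalizing c with
  | nil => exact hF c
  | cons a l ih => exact ((ih _).add (ih _)).div_const 2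

lemma lintegral_ofReal_signMean {μ : Measure α} (hF : ∀ a, Measurable (F a))
    (hF₀ : ∀ a t, 0 ≤ F a t) (hf₀ : ∀ a, 0 ≤ f a) {K : ENNReal}
    (hint : ∀ a, ∫⁻ t, ENNReal.ofReal (F a t) ∂μ = ENNReal.ofReal (f a) * K) (c : V)
    (l : List V) :
    ∫⁻ t, ENNReal.ofReal (signMean (fun a ↦ F a t) c l) ∂μ =
      ENNReal.ofReal (signMean f c l) * K := by
  induction l generalizing c with
  | nil => exact hint c
  | cons a l ih =>
    have ofReal_cons {h : V → ℝ} (hh : ∀ x, 0 ≤ h x) : ENNReal.ofReal (signMean h c (a :: l)) =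
        ENNReal.ofReal 2⁻¹ *
          (ENNReal.ofReal (signMean h (c + a) l) + ENNReal.ofReal (signMean h (c - a) l)) := by
      rw [← ENNReal.ofReal_add (signMean_nonneg hh _ l) (signMean_nonneg hh _ l),
        ← ENNReal.ofReal_mul (by positivity), signMean_cons, inv_mul_eq_div]
    simp only [ofReal_cons hf₀, ofReal_cons fun x ↦ hF₀ x _]
    rw [lintegral_const_mul' _ _ ENNReal.ofReal_ne_top,
      lintegral_add_left (measurable_signMean hF _ l).ennreal_ofReal, ih, ih, ← add_mul, mul_assoc]

end Integral

end SignMean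

/-! ### Moments of real Rademacher sums -/

section SignMeanReal

variable {p : ℝ}

lemma abs_neg_rpow (p x : ℝ) : |-x| ^ p = |x| ^ p := by rw [abs_neg]

lemma signMean_cos_mul (t c : ℝ) (l : List ℝ) :
    signMean (fun a ↦ cos (a * t)) c l = cos (c * t) * (l.map fun a ↦ cos (a * t)).prod := by
  induction l generalizing c with
  | nil => simp [signMean_nil]
  | cons a l ih =>
    rw [signMean_cons, ih, ih, List.map_cons, List.prod_cons, add_mul, sub_mul, cos_add, cos_sub]
    ring

lemma signMean_abs_rpow_mul (p s c : ℝ) (l : List ℝ) :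
    signMean (|·| ^ p) (s * c) (l.map (s * ·)) = |s| ^ p * signMean (|·| ^ p) c l := by
  induction l generalizing c with
  | nil => simp only [List.map_nil, signMean_nil, abs_mul, mul_rpow (abs_nonneg _) (abs_nonneg _)]
  | cons a l ih =>
    rw [List.map_cons, signMean_cons, signMean_cons, ← mul_add, ← mul_sub, ih, ih]
    ring

lemma signMean_abs_rpow_two (c : ℝ) (l : List ℝ) :
    signMean (|·| ^ (2 : ℝ)) c l = c ^ 2 + (l.map (· ^ 2)).sum := by
  induction l generalizing c with
  | nil => simp [signMean_nil]
  | cons a l ih => rw [signMean_cons, ih, ih, List.map_cons, List.sum_cons]; ring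

lemma sum_map_sq_nonneg (l : List ℝ) : 0 ≤ (l.map (· ^ 2)).sum :=
  List.sum_nonneg (List.forall_mem_map.2 fun a _ ↦ sq_nonneg a)

lemma lintegral_one_sub_signMean_cos (hp : p ≠ 0) (c : ℝ) (l : List ℝ) :
    ∫⁻ t, ENNReal.ofReal (1 - signMean (fun a ↦ cos (a * t)) c l) ∂powMeasure p =
      ENNReal.ofReal (signMean (|·| ^ p) c l) * cosConst p := by
  simp only [← signMean_one_sub]
  exact lintegral_ofReal_signMean (fun a ↦ by fun_prop) (fun a t ↦ sub_nonneg.2 (cos_le_one _))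
    (fun a ↦ by positivity) (lintegral_one_sub_cos_mul hp) c l

lemma prod_le_sum_mul_rpow {ι : Type*} (s : Finset ι) {w x : ι → ℝ} (hw : ∀ i ∈ s, 0 ≤ w i)
    (hw' : ∑ i ∈ s, w i = 1) (hx : ∀ i ∈ s, 0 ≤ x i) (hx' : ∀ i ∈ s, x i ≤ 1) :
    ∏ i ∈ s, x i ≤ ∑ i ∈ s, w i * x i ^ (1 / w i) := by
  refine le_trans (Finset.prod_le_prod hx fun i hi ↦ ?_) (geom_mean_le_arith_mean_weighted s w
    (fun i ↦ x i ^ (1 / w i)) hw hw' fun i hi ↦ rpow_nonneg (hx i hi) _)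
  rw [← rpow_mul (hx i hi)]
  rcases eq_or_ne (w i) 0 with h | h
  · rw [h, mul_zero, rpow_zero]
    exact hx' i hi
  · rw [one_div_mul_cancel h, rpow_one]

lemma gaussMoment_mul_cosConst_le_lintegral_cos_mul (hp : 9 / 5 ≤ p) (hp' : p < 2)
    (hC : gaussMoment p ≤ 2 ^ (p / 2 - 1)) {v σ : ℝ} (hv : v ≠ 0) (hσ : v ^ 2 ≤ σ / 2) :
    ENNReal.ofReal (gaussMoment p * σ ^ (p / 2)) * cosConst p ≤
      ∫⁻ t, ENNReal.ofReal (1 - |cos (v * t)| ^ (σ / v ^ 2)) ∂powMeasure p := by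
  have hv₂ : 0 < v ^ 2 := by positivity
  have two_le : 2 ≤ σ / v ^ 2 := by rw [le_div_iff₀ hv₂]; linarith
  have abs_cos (t : ℝ) : |cos (v * t)| = |cos (|v| * t)| := by
    rcases abs_choice v with h | h <;> rw [h]
    rw [neg_mul, cos_neg]
  have sigma_rpow : |v| ^ p * ((σ / v ^ 2) ^ (p / 2) * gaussMoment p) =
      gaussMoment p * σ ^ (p / 2) := by
    rw [div_rpow (by linarith) hv₂.le, ← sq_abs v, ← rpow_natCast, ← rpow_mul (abs_nonneg v)]
    push_cast
    field_simp
  simp only [abs_cos]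
  rw [lintegral_powMeasure_comp_mul p (f := fun t ↦ ENNReal.ofReal (1 - |cos t| ^ (σ / v ^ 2)))
    (by fun_prop) (abs_pos.2 hv), ← sigma_rpow, ENNReal.ofReal_mul (by positivity), mul_assoc]
  gcongr
  exact gaussMoment_mul_cosConst_le_lintegral hp hp' hC two_le

lemma sum_mul_one_sub_le_one_sub_signMean_cos {n : ℕ} (v : Fin n → ℝ) {w : Fin n → ℝ}
    (hw : ∀ i, 0 ≤ w i) (hw' : ∑ i, w i = 1) (t : ℝ) :
    ∑ i, w i * (1 - |cos (v i * t)| ^ (1 / w i)) ≤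
      1 - signMean (fun a ↦ cos (a * t)) 0 (List.ofFn v) := by
  have mean_le : signMean (fun a ↦ cos (a * t)) 0 (List.ofFn v) ≤ ∏ i, |cos (v i * t)| := by
    rw [signMean_cos_mul, List.map_ofFn, List.prod_ofFn, zero_mul, cos_zero, one_mul]
    exact (le_abs_self _).trans (Finset.abs_prod _ _).le
  have amgm := prod_le_sum_mul_rpow Finset.univ (x := fun i ↦ |cos (v i * t)|) (fun i _ ↦ hw i)
    hw' (fun i _ ↦ abs_nonneg _) fun i _ ↦ abs_cos_le_one _
  simp only [mul_sub, mul_one, Finset.sum_sub_distrib, hw']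
  linarith

lemma ofReal_mul_cosConst_le_lintegral_one_sub_signMean_cos (hp : 9 / 5 ≤ p) (hp' : p < 2)
    (hC : gaussMoment p ≤ 2 ^ (p / 2 - 1)) {n : ℕ} {v : Fin n → ℝ} {σ : ℝ} (hσ : 0 < σ)
    (hsum : ∑ i, v i ^ 2 = σ) (hmax : ∀ i, v i ^ 2 ≤ σ / 2) :
    ENNReal.ofReal (gaussMoment p * σ ^ (p / 2)) * cosConst p ≤
      ∫⁻ t, ENNReal.ofReal (1 - signMean (fun a ↦ cos (a * t)) 0 (List.ofFn v))
        ∂powMeasure p := by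
  set w : Fin n → ℝ := fun i ↦ v i ^ 2 / σ
  set K := ENNReal.ofReal (gaussMoment p * σ ^ (p / 2)) * cosConst p
  have w_nonneg (i) : 0 ≤ w i := by positivity
  have sum_w : ∑ i, w i = 1 := by rw [← Finset.sum_div, hsum, div_self hσ.ne']
  have term_nonneg (i t) : 0 ≤ w i * (1 - |cos (v i * t)| ^ (1 / w i)) :=
    mul_nonneg (w_nonneg i) (sub_nonneg.2 (rpow_le_one (abs_nonneg _) (abs_cos_le_one _)
      (one_div_nonneg.2 (w_nonneg i))))
  have term_le (i) : ENNReal.ofReal (w i) * K ≤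
      ∫⁻ t, ENNReal.ofReal (w i * (1 - |cos (v i * t)| ^ (1 / w i))) ∂powMeasure p := by
    rcases eq_or_ne (v i) 0 with hv | hv
    · simp [w, hv]
    simp only [ENNReal.ofReal_mul (w_nonneg i), w, one_div_div]
    rw [lintegral_const_mul' _ _ ENNReal.ofReal_ne_top]
    gcongr
    exact gaussMoment_mul_cosConst_le_lintegral_cos_mul hp hp' hC hv (hmax i)
  calc K = ∑ i, ENNReal.ofReal (w i) * K := by
        rw [← Finset.sum_mul, ← ENNReal.ofReal_sum_of_nonneg fun i _ ↦ w_nonneg i, sum_w,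
          ENNReal.ofReal_one, one_mul]
    _ ≤ ∑ i, ∫⁻ t, ENNReal.ofReal (w i * (1 - |cos (v i * t)| ^ (1 / w i))) ∂powMeasure p :=
        Finset.sum_le_sum fun i _ ↦ term_le i
    _ = ∫⁻ t, ENNReal.ofReal (∑ i, w i * (1 - |cos (v i * t)| ^ (1 / w i))) ∂powMeasure p := by
        rw [← lintegral_finsetSum _ fun i _ ↦ by fun_prop]
        exact lintegral_congr fun t ↦ (ENNReal.ofReal_sum_of_nonneg fun i _ ↦ term_nonneg i t).symm
    _ ≤ _ := lintegral_mono fun t ↦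
        ENNReal.ofReal_le_ofReal (sum_mul_one_sub_le_one_sub_signMean_cos v w_nonneg sum_w t)

lemma gaussMoment_mul_rpow_le_signMean_of_forall_sq_le (hp : 9 / 5 ≤ p) (hp' : p < 2)
    (hC : gaussMoment p ≤ 2 ^ (p / 2 - 1)) {l : List ℝ} (hl : 0 < (l.map (· ^ 2)).sum)
    (hmax : ∀ a ∈ l, a ^ 2 ≤ (l.map (· ^ 2)).sum / 2) :
    gaussMoment p * (l.map (· ^ 2)).sum ^ (p / 2) ≤ signMean (|·| ^ p) 0 l := by
  have hp₀ : 0 < p := by linarith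
  have sum_get : ∑ i, l.get i ^ 2 = (l.map (· ^ 2)).sum := by
    conv_rhs => rw [← List.ofFn_get l, List.map_ofFn, List.sum_ofFn]
    rfl
  have integral_le := ofReal_mul_cosConst_le_lintegral_one_sub_signMean_cos hp hp' hC hl sum_get
    fun i ↦ hmax _ (l.get_mem i)
  rw [List.ofFn_get, lintegral_one_sub_signMean_cos hp₀.ne',
    ENNReal.mul_le_mul_iff_left (cosConst_ne_zero hp₀) (cosConst_ne_top hp₀ hp')] at integral_le
  exact (ENNReal.ofReal_le_ofReal_iff (signMean_nonneg (fun x ↦ by positivity) 0 l)).1 integral_le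

end SignMeanReal

/-! ### The Nazarov–Podkorytov induction -/

section Concavity

variable {q x y z A B t : ℝ}

lemma rpow_chord_le (hq : 0 ≤ q) (hq' : q ≤ 1) (hA : 0 ≤ A) (hAz : A ≤ z) (hzB : z ≤ B) :
    (B - z) * A ^ q + (z - A) * B ^ q ≤ (B - A) * z ^ q := by
  rcases hAz.eq_or_lt with rfl | hAz
  · simp
  rcases hzB.eq_or_lt with rfl | hzB
  · simp
  have := (concaveOn_rpow hq hq').neg.secant_mono_aux1 hA (hA.trans (hAz.trans hzB).le) hAz hzB
  simp only [Pi.neg_apply] at this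
  linarith

lemma rpow_add_rpow_le (hq : 0 ≤ q) (hq' : q ≤ 1) (hx : 0 ≤ x) (hy : 0 ≤ y) :
    x ^ q + y ^ q ≤ 2 * ((x + y) / 2) ^ q := by
  have midpoint := (concaveOn_rpow hq hq').2 hx hy one_half_pos.le one_half_pos.le (add_halves 1)
  simp only [smul_eq_mul, one_div_mul_eq_div, ← add_div] at midpoint
  linarith

lemma two_mul_rpow_add_rpow_le (hq : 0 ≤ q) (hq' : q ≤ 1) (hA : 0 ≤ A) (hy : A ≤ y) (hz : A ≤ z)
    (hB : 2 * y + z = 2 * A + B) : 2 * A ^ q + B ^ q ≤ 2 * y ^ q + z ^ q := by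
  rcases (show A ≤ B by linarith).eq_or_lt with rfl | hAB
  · obtain rfl : y = A := by linarith
    obtain rfl : z = y := by linarith
    rfl
  have chord_y := rpow_chord_le hq hq' hA hy (by linarith : y ≤ B)
  have chord_z := rpow_chord_le hq hq' hA hz (by linarith : z ≤ B)
  refine le_of_mul_le_mul_left ?_ (sub_pos.2 hAB)
  obtain rfl : B = 2 * y + z - 2 * A := by linarith
  linarith

/-- The function `(1 + x) ^ q`, with its graph on `[0, 1]` replaced by the point reflection through
`(1, 2 ^ q)` of its graph on `[1, 2]`. The inductive step of the Khintchine inequality needs the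
midpoint convexity around points of `[0, 1]` that this modification creates. -/
noncomputable def profile (q x : ℝ) : ℝ :=
  if 1 ≤ x then (1 + x) ^ q else 2 * 2 ^ q - (3 - x) ^ q

lemma profile_of_one_le (hx : 1 ≤ x) : profile q x = (1 + x) ^ q := if_pos hx

lemma profile_of_le_one (hx : x ≤ 1) : profile q x = 2 * 2 ^ q - (3 - x) ^ q := by
  rcases hx.eq_or_lt with rfl | hx
  · norm_num [profile, two_mul]
  · exact if_neg hx.not_ge

lemma one_add_rpow_le_profile (hq : 0 ≤ q) (hq' : q ≤ 1) (hx : 0 ≤ x) :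
    (1 + x) ^ q ≤ profile q x := by
  rcases le_total 1 x with h | h
  · rw [profile_of_one_le h]
  · have := rpow_add_rpow_le hq hq' (x := 1 + x) (y := 3 - x) (by linarith) (by linarith)
    rw [show (1 + x + (3 - x)) / 2 = 2 by ring] at this
    rw [profile_of_le_one h]
    linarith

lemma two_mul_profile_le (hq : 0 ≤ q) (hq' : q ≤ 1) (hx : x ≤ 1) (ht : |t| ≤ x) :
    2 * profile q x ≤ profile q (x + t) + profile q (x - t) := by
  wlog ht₀ : 0 ≤ t generalizing t with H
  · have := H (t := -t) (by rwa [abs_neg]) (by linarith)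
    rwa [sub_neg_eq_add, ← sub_eq_add_neg, add_comm (profile q (x - t))] at this
  rw [abs_of_nonneg ht₀] at ht
  rw [profile_of_le_one hx, profile_of_le_one (by linarith : x - t ≤ 1)]
  rcases le_total (x + t) 1 with h | h
  · have := rpow_add_rpow_le hq hq' (x := 3 - (x + t)) (y := 3 - (x - t)) (by linarith)
      (by linarith)
    rw [show (3 - (x + t) + (3 - (x - t))) / 2 = 3 - x by ring] at this
    rw [profile_of_le_one h]
    linarith
  · have := two_mul_rpow_add_rpow_le hq hq' zero_le_two (y := 3 - x) (z := 1 + (x + t))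
      (B := 3 - (x - t)) (by linarith) (by linarith) (by ring)
    rw [profile_of_one_le h]
    linarith

end Concavity

section TwoPoint

variable {q p a C : ℝ}

lemma log_le_neg_two_mul_div {c : ℝ} (hc : 0 < c) (hc' : c ≤ 1) :
    log c ≤ -(2 * (1 - c) / (1 + c)) := by
  have h := le_log_one_add_of_nonneg (sub_nonneg.2 ((one_le_inv₀ hc).2 hc'))
  rw [add_sub_cancel, log_inv] at h
  have : 2 * (c⁻¹ - 1) / (c⁻¹ - 1 + 2) = 2 * (1 - c) / (1 + c) := by
    rw [div_eq_div_iff (by linarith [inv_pos.2 hc]) (by linarith)]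
    field_simp
    ring
  linarith

lemma sum_mul_log_nonpos {c d : ℝ} (hc : 0 < c) (hd : 0 ≤ d) (hcd : c + d = 1) :
    c ^ 2 * log (c ^ 2) + d ^ 2 * log (d ^ 2) + (1 + 2 * (c * d)) * log (1 + 2 * (c * d)) ≤ 0 := by
  rcases hd.eq_or_lt with rfl | hd
  · obtain rfl : c = 1 := by linarith
    simp
  have he := mul_pos hc hd
  have he' : c * d ≤ 1 := mul_le_one₀ (by linarith) hd.le (by linarith)
  have log_c := mul_le_mul_of_nonneg_left (log_le_neg_two_mul_div hc (by linarith)) (sq_nonneg c)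
  have log_d := mul_le_mul_of_nonneg_left (log_le_neg_two_mul_div hd (by linarith)) (sq_nonneg d)
  have log_one_add := mul_log_le (w := 1 + 2 * (c * d)) (by linarith)
  have sum_eq : c ^ 2 * (2 * (1 - c) / (1 + c)) + d ^ 2 * (2 * (1 - d) / (1 + d)) =
      2 * (c * d) * (1 + 2 * (c * d)) / (2 + c * d) := by
    obtain rfl : d = 1 - c := by linarith
    have : 2 + c * (1 - c) ≠ 0 := by positivity
    have : 1 + (1 - c) ≠ 0 := by positivity
    field_simp
    ring
  have le_sum : c * d * (1 + c * d) ≤ 2 * (c * d) * (1 + 2 * (c * d)) / (2 + c * d) := by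
    rw [le_div_iff₀ (by positivity)]
    nlinarith [mul_pos he he]
  rw [log_pow, log_pow]
  push_cast
  nlinarith

lemma two_le_rpow_add_rpow_add_rpow (hq : q ≤ 1) {c d : ℝ} (hc : 0 < c) (hd : 0 ≤ d)
    (hcd : c + d = 1) : 2 ≤ (c ^ 2) ^ q + (d ^ 2) ^ q + (1 + 2 * (c * d)) ^ q := by
  have c_bound := sub_mul_log_le_rpow (sq_nonneg c) q
  have d_bound := sub_mul_log_le_rpow (sq_nonneg d) q
  have one_add_bound := sub_mul_log_le_rpow (z := 1 + 2 * (c * d)) (by positivity) q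
  have sum_eq : c ^ 2 + d ^ 2 + (1 + 2 * (c * d)) = 2 := by
    calc _ = (c + d) ^ 2 + 1 := by ring
      _ = 2 := by rw [hcd]; norm_num
  have entropy := mul_nonpos_of_nonneg_of_nonpos (sub_nonneg.2 hq) (sum_mul_log_nonpos hc hd hcd)
  linarith

lemma two_mul_four_rpow_le (hq : q ≤ 1) (ha : |a| ≤ 1) :
    2 * 4 ^ q ≤ ((1 + a) ^ 2) ^ q + ((1 - a) ^ 2) ^ q + (6 - 2 * a ^ 2) ^ q := by
  wlog ha₀ : 0 ≤ a generalizing a with H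
  · have := H (a := -a) (by rwa [abs_neg]) (by linarith)
    rwa [neg_sq, ← sub_eq_add_neg, sub_neg_eq_add, add_comm (((1 - a) ^ 2) ^ q)] at this
  rw [abs_of_nonneg ha₀] at ha
  have prod_nonneg : 0 ≤ (1 + a) / 2 * ((1 - a) / 2) := mul_nonneg (by linarith) (by linarith)
  have scaled := two_le_rpow_add_rpow_add_rpow hq (c := (1 + a) / 2) (d := (1 - a) / 2)
    (by linarith) (by linarith) (by ring)
  calc 2 * (4 : ℝ) ^ q ≤ (((1 + a) / 2) ^ 2) ^ q * 4 ^ q + (((1 - a) / 2) ^ 2) ^ q * 4 ^ q +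
        (1 + 2 * ((1 + a) / 2 * ((1 - a) / 2))) ^ q * 4 ^ q := by
        rw [← add_mul, ← add_mul]
        gcongr
    _ = _ := by
        rw [← mul_rpow (sq_nonneg _) (by norm_num), ← mul_rpow (sq_nonneg _) (by norm_num),
          ← mul_rpow (by linarith) (by norm_num)]
        ring_nf

lemma abs_rpow_eq (p x : ℝ) : |x| ^ p = (x ^ 2) ^ (p / 2) := by
  rw [← sq_abs, ← rpow_natCast_mul (abs_nonneg x)]
  congr 1; push_cast; ring

lemma profile_sq_nonneg (hq : 0 ≤ q) (hq' : q ≤ 1) (x : ℝ) : 0 ≤ profile q (x ^ 2) :=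
  (by positivity : 0 ≤ (1 + x ^ 2) ^ q).trans (one_add_rpow_le_profile hq hq' (sq_nonneg x))

lemma mul_profile_sq_le (hp : 0 ≤ p) (hp' : p ≤ 2) (hC : C ≤ 2 ^ (p / 2 - 1)) (ha : |a| ≤ 1) :
    C * profile (p / 2) (a ^ 2) ≤ (|1 + a| ^ p + |1 - a| ^ p) / 2 := by
  have hq : p / 2 ≤ 1 := by linarith
  have ha₂ : a ^ 2 ≤ 1 := (sq_le_one_iff_abs_le_one a).2 ha
  have two_point := two_mul_four_rpow_le hq ha
  have six_rpow : (6 - 2 * a ^ 2) ^ (p / 2) = 2 ^ (p / 2) * (3 - a ^ 2) ^ (p / 2) := by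
    rw [← mul_rpow zero_le_two (by linarith)]
    congr 1; ring
  have four_rpow : (4 : ℝ) ^ (p / 2) = 2 ^ (p / 2) * 2 ^ (p / 2) := by
    rw [← mul_rpow zero_le_two zero_le_two]; norm_num
  refine (mul_le_mul_of_nonneg_right hC (profile_sq_nonneg (by linarith) hq a)).trans ?_
  rw [six_rpow, four_rpow] at two_point
  rw [abs_rpow_eq, abs_rpow_eq, profile_of_le_one ha₂, rpow_sub_one two_ne_zero]
  linarith

end TwoPoint

section Induction

variable {p C a : ℝ} {l : List ℝ}

lemma exists_signMean_zero_eq_mul (p : ℝ) (ha : a ∈ l) (ha₀ : a ≠ 0) :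
    ∃ l' : List ℝ, l'.length + 1 = l.length ∧
      (l.map (· ^ 2)).sum = a ^ 2 * (1 + (l'.map (· ^ 2)).sum) ∧
      signMean (|·| ^ p) 0 l = |a| ^ p * signMean (|·| ^ p) 1 l' := by
  have perm := List.perm_cons_erase ha
  refine ⟨(l.erase a).map (a⁻¹ * ·), ?_, ?_, ?_⟩
  · rw [List.length_map, perm.length_eq, List.length_cons]
  · have scaled : (fun x : ℝ ↦ x ^ 2) ∘ (a⁻¹ * ·) = fun x ↦ (a ^ 2)⁻¹ * x ^ 2 := by
      ext x; simp [mul_pow]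
    rw [(perm.map _).sum_eq, List.map_cons, List.sum_cons, List.map_map, scaled,
      List.sum_map_mul_left]
    field_simp
  · rw [signMean_perm _ 0 perm, signMean_zero_cons (abs_neg_rpow p), ← signMean_abs_rpow_mul,
      mul_one, List.map_map]
    simp [Function.comp_def, ha₀]

lemma mul_rpow_le_signMean_zero_of_mem (hp : 0 ≤ p) (hp' : p ≤ 2) (hC : 0 ≤ C) (ha : a ∈ l)
    (ha₀ : a ≠ 0) (h : ∀ l' : List ℝ, l'.length + 1 = l.length →
      (l.map (· ^ 2)).sum = a ^ 2 * (1 + (l'.map (· ^ 2)).sum) →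
      C * profile (p / 2) (l'.map (· ^ 2)).sum ≤ signMean (|·| ^ p) 1 l') :
    C * (l.map (· ^ 2)).sum ^ (p / 2) ≤ signMean (|·| ^ p) 0 l := by
  obtain ⟨l', length_eq, sum_eq, mean_eq⟩ := exists_signMean_zero_eq_mul p ha ha₀
  have sum_nonneg := sum_map_sq_nonneg l'
  calc C * (l.map (· ^ 2)).sum ^ (p / 2)
      = |a| ^ p * (C * (1 + (l'.map (· ^ 2)).sum) ^ (p / 2)) := by
        rw [sum_eq, mul_rpow (sq_nonneg a) (by linarith), ← abs_rpow_eq, mul_left_comm]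
    _ ≤ |a| ^ p * (C * profile (p / 2) (l'.map (· ^ 2)).sum) := by
        gcongr
        exact one_add_rpow_le_profile (by linarith) (by linarith) sum_nonneg
    _ ≤ |a| ^ p * signMean (|·| ^ p) 1 l' := by
        gcongr
        exact h l' length_eq sum_eq
    _ = _ := mean_eq.symm

-- Merging two coefficients `a`, `b` into `a ± b` moves the sum of squares by `± 2 * a * b`.
lemma mul_profile_le_signMean_of_sum_sq_le_one (hp : 0 ≤ p) (hp' : p ≤ 2) (hC₀ : 0 ≤ C)
    (hC : C ≤ 2 ^ (p / 2 - 1)) (ih : ∀ l' : List ℝ, l'.length + 1 = l.length →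
      C * profile (p / 2) (l'.map (· ^ 2)).sum ≤ signMean (|·| ^ p) 1 l')
    (hl : (l.map (· ^ 2)).sum ≤ 1) :
    C * profile (p / 2) (l.map (· ^ 2)).sum ≤ signMean (|·| ^ p) 1 l := by
  match l with
  | [] => simpa [signMean_nil] using mul_profile_sq_le hp hp' hC (a := 0) (by simp)
  | [a] =>
    simp only [List.map_cons, List.map_nil, List.sum_cons, List.sum_nil, add_zero] at hl ⊢
    exact mul_profile_sq_le hp hp' hC ((sq_le_one_iff_abs_le_one a).1 hl)
  | a :: b :: l =>
    have ih_add := ih ((a + b) :: l) rfl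
    have ih_sub := ih ((a - b) :: l) rfl
    have sum_nonneg := sum_map_sq_nonneg l
    simp only [List.map_cons, List.sum_cons] at hl ih_add ih_sub ⊢
    set S := (l.map (· ^ 2)).sum
    have convexity := two_mul_profile_le (q := p / 2) (by linarith) (by linarith) hl
      (t := 2 * a * b) (abs_le.2 ⟨by linarith [sq_nonneg (a + b)], by linarith [sq_nonneg (a - b)]⟩)
    rw [show a ^ 2 + (b ^ 2 + S) + 2 * a * b = (a + b) ^ 2 + S by ring,
      show a ^ 2 + (b ^ 2 + S) - 2 * a * b = (a - b) ^ 2 + S by ring] at convexity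
    have := mul_le_mul_of_nonneg_left convexity hC₀
    rw [signMean_merge]
    linarith

lemma mul_profile_le_signMean_of_one_lt_sum_sq (hp : 9 / 5 ≤ p) (hp' : p < 2)
    (hC : gaussMoment p ≤ 2 ^ (p / 2 - 1))
    (h : ∀ l' : List ℝ, l'.length = l.length → (l'.map (· ^ 2)).sum ≤ 1 →
      gaussMoment p * profile (p / 2) (l'.map (· ^ 2)).sum ≤ signMean (|·| ^ p) 1 l')
    (hl : 1 < (l.map (· ^ 2)).sum) :
    gaussMoment p * profile (p / 2) (l.map (· ^ 2)).sum ≤ signMean (|·| ^ p) 1 l := by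
  have sum_cons : ((1 :: l).map (· ^ 2)).sum = 1 + (l.map (· ^ 2)).sum := by simp
  rw [profile_of_one_le hl.le, ← signMean_zero_cons (abs_neg_rpow p), ← sum_cons]
  by_cases hmax : ∀ a ∈ 1 :: l, a ^ 2 ≤ ((1 :: l).map (· ^ 2)).sum / 2
  · exact gaussMoment_mul_rpow_le_signMean_of_forall_sq_le hp hp' hC (by linarith) hmax
  push Not at hmax
  obtain ⟨a, ha, lt_sq⟩ := hmax
  refine mul_rpow_le_signMean_zero_of_mem (by linarith) hp'.le (gaussMoment_pos (by linarith)).le ha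
    (by rintro rfl; linarith) fun l' length_eq sum_eq ↦ h l' (Nat.succ.inj length_eq) ?_
  by_contra! one_lt
  nlinarith

lemma gaussMoment_mul_profile_le_signMean (hp : 9 / 5 ≤ p) (hp' : p < 2)
    (hC : gaussMoment p ≤ 2 ^ (p / 2 - 1)) (l : List ℝ) :
    gaussMoment p * profile (p / 2) (l.map (· ^ 2)).sum ≤ signMean (|·| ^ p) 1 l := by
  induction hn : l.length using Nat.strong_induction_on generalizing l with
  | _ n ih =>
    have of_sum_le_one (l' : List ℝ) (length_eq : l'.length = n) :=
      mul_profile_le_signMean_of_sum_sq_le_one (l := l') (by linarith) hp'.le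
        (gaussMoment_pos (by linarith)).le hC fun l'' h ↦ ih l''.length (by lia) l'' rfl
    rcases le_or_gt (l.map (· ^ 2)).sum 1 with hl | hl
    · exact of_sum_le_one l hn hl
    · exact mul_profile_le_signMean_of_one_lt_sum_sq hp hp' hC
        (fun l' length_eq ↦ of_sum_le_one l' (length_eq.trans hn)) hl

lemma gaussMoment_mul_rpow_le_signMean (hp : 9 / 5 ≤ p) (hp' : p < 2)
    (hC : gaussMoment p ≤ 2 ^ (p / 2 - 1)) (l : List ℝ) :
    gaussMoment p * (l.map (· ^ 2)).sum ^ (p / 2) ≤ signMean (|·| ^ p) 0 l := by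
  by_cases h : ∀ a ∈ l, a = 0
  · have sum_eq : (l.map (· ^ 2)).sum = 0 :=
      List.sum_eq_zero (List.forall_mem_map.2 fun a ha ↦ by rw [h a ha, zero_pow two_ne_zero])
    rw [sum_eq, zero_rpow (by linarith), mul_zero]
    exact signMean_nonneg (fun x ↦ by positivity) 0 l
  · push Not at h
    obtain ⟨a, ha, ha₀⟩ := h
    exact mul_rpow_le_signMean_zero_of_mem (by linarith) hp'.le (gaussMoment_pos (by linarith)).le
      ha ha₀ fun l' _ _ ↦ gaussMoment_mul_profile_le_signMean hp hp' hC l'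

end Induction

/-! ### The critical exponent -/

section CriticalExponent

lemma Gamma_three_half : Gamma (3 / 2) = √π / 2 := by
  rw [show (3 : ℝ) / 2 = 1 / 2 + 1 by norm_num, Gamma_add_one (by norm_num), Gamma_one_half_eq]
  ring

lemma Gamma_add_natCast {x : ℝ} (hx : 0 < x) (n : ℕ) :
    Gamma (x + n) = Gamma x * ∏ k ∈ Finset.range n, (x + k) := by
  induction n with
  | zero => simp
  | succ n ih =>
    rw [Finset.prod_range_succ, ← mul_assoc, ← ih, Nat.cast_succ, ← add_assoc,
      Gamma_add_one (by positivity), mul_comm]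

lemma Gamma_add_le {y θ : ℝ} (hy : 0 < y) (hθ : 0 < θ) (hθ' : θ < 1) :
    Gamma (y + θ) ≤ Gamma y * y ^ θ := by
  have hG := Gamma_pos_of_pos hy
  have h := Gamma_mul_add_mul_le_rpow_Gamma_mul_rpow_Gamma hy (by linarith : 0 < y + 1)
    (sub_pos.2 hθ') hθ (by ring)
  rwa [show (1 - θ) * y + θ * (y + 1) = y + θ by ring, Gamma_add_one hy.ne',
    mul_rpow hy.le hG.le, mul_left_comm, ← rpow_add hG, sub_add_cancel, rpow_one, mul_comm] at h

/- `Gamma (3 / 2)` and `Gamma (7 / 5)` differ by about one part in a thousand, so the error in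
`Gamma_add_le`, of relative size `θ * (1 - θ) / (2 * y)`, is made smaller than that by first moving
both arguments up by `60`. -/
lemma Gamma_three_half_lt : Gamma (3 / 2) < Gamma (7 / 5) := by
  set P := ∏ k ∈ Finset.range 60, ((3 : ℝ) / 2 + k) with hP
  set Q := ∏ k ∈ Finset.range 60, ((7 : ℝ) / 5 + k) with hQ
  have hP₀ : 0 < P := Finset.prod_pos fun k _ ↦ by positivity
  have hPQ : Q * (7 / 5 + (60 : ℕ)) ^ (1 / 10 : ℝ) < P := by
    refine lt_of_pow_lt_pow_left₀ 10 hP₀.le ?_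
    rw [mul_pow, ← rpow_natCast (_ ^ (1 / 10 : ℝ)), ← rpow_mul (by positivity), hP, hQ]
    norm_num [Finset.prod_range_succ]
  have h := Gamma_add_le (y := 7 / 5 + (60 : ℕ)) (θ := 1 / 10) (by norm_num) (by norm_num)
    (by norm_num)
  rw [show (7 : ℝ) / 5 + (60 : ℕ) + 1 / 10 = 3 / 2 + (60 : ℕ) by norm_num,
    Gamma_add_natCast (by norm_num), Gamma_add_natCast (by norm_num), ← hP, ← hQ, mul_assoc] at h
  have hΓ : 0 < Gamma (7 / 5) := Gamma_pos_of_pos (by norm_num)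
  exact lt_of_mul_lt_mul_right (h.trans_lt (mul_lt_mul_of_pos_left hPQ hΓ)) hP₀.le

lemma eulerMascheroniConstant_lt : eulerMascheroniConstant < 2 - 2 * log 2 := by
  have h := eulerMascheroniConstant_lt_eulerMascheroniSeq' 16
  have hlog : log (16 : ℕ) = 4 * log 2 := by
    rw [show ((16 : ℕ) : ℝ) = 2 ^ 4 by norm_num, log_pow]
    norm_num
  simp only [eulerMascheroniSeq', hlog] at h
  norm_num [harmonic, Finset.sum_range_succ] at h
  linarith [log_two_gt_d9]

lemma hasDerivAt_Gamma_three_half :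
    HasDerivAt Gamma (√π * (1 - eulerMascheroniConstant / 2 - log 2)) (3 / 2) := by
  have hhalf : HasDerivAt Gamma (-√π * (eulerMascheroniConstant + 2 * log 2)) (3 / 2 - 1) := by
    convert! hasDerivAt_Gamma_one_half using 1
    norm_num
  have h : HasDerivAt (fun x : ℝ ↦ (x - 1) * Gamma (x - 1))
      (√π * (1 - eulerMascheroniConstant / 2 - log 2)) (3 / 2) := by
    convert! ((hasDerivAt_id ((3 : ℝ) / 2)).sub_const 1).mul (hhalf.comp_sub_const _ 1) using 1
    rw [show (3 : ℝ) / 2 - 1 = 1 / 2 by norm_num, Gamma_one_half_eq, id]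
    ring
  refine h.congr_of_eventuallyEq ?_
  filter_upwards [lt_mem_nhds (show (1 : ℝ) < 3 / 2 by norm_num)] with x hx
  rw [← Gamma_add_one (sub_pos.2 hx).ne', sub_add_cancel]

lemma exists_Gamma_lt : ∃ x : ℝ, 1 < x ∧ x < 3 / 2 ∧ Gamma x < √π / 2 := by
  have hpos : 0 < √π * (1 - eulerMascheroniConstant / 2 - log 2) :=
    mul_pos (sqrt_pos.2 pi_pos) (by linarith [eulerMascheroniConstant_lt])
  have hslope := (hasDerivAt_iff_tendsto_slope.1 hasDerivAt_Gamma_three_half).mono_left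
    (nhdsWithin_mono (s := Set.Iio (3 / 2)) _ fun x hx ↦ ne_of_lt hx)
  obtain ⟨x, hx, hx₁, hx₂⟩ := ((hslope.eventually (lt_mem_nhds hpos)).and
    (Ioo_mem_nhdsLT (show (1 : ℝ) < 3 / 2 by norm_num))).exists
  rw [slope_def_field, lt_div_iff_of_neg (by linarith), zero_mul, Gamma_three_half] at hx
  exact ⟨x, hx₁, hx₂, by linarith⟩

/-- The exponents at which the Gaussian constant equals the constant of two equal coefficients; by
definition `khintchineP0` is their infimum. -/
def criticalSet : Set ℝ := {p : ℝ | 1 < p ∧ p < 2 ∧ Gamma ((p + 1) / 2) = √π / 2}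

lemma criticalSet_nonempty : criticalSet.Nonempty := by
  obtain ⟨x, hx₁, hx₂, hx⟩ := exists_Gamma_lt
  have hcont : ContinuousOn Gamma (Set.Icc 1 x) :=
    differentiableOn_Gamma_Ioi.continuousOn.mono fun y hy ↦ one_pos.trans_le hy.1
  have hone : √π / 2 < Gamma 1 := Gamma_three_half ▸ Gamma_one.symm ▸ Gamma_three_div_two_lt_one
  obtain ⟨y, ⟨hy₁, hy₂⟩, hy⟩ := intermediate_value_Ioo' hx₁.le hcont ⟨hx, hone⟩
  refine ⟨2 * y - 1, by linarith, by linarith, ?_⟩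
  rw [sub_add_cancel, mul_div_cancel_left₀ y two_ne_zero, hy]

lemma Gamma_add_one_div_two_le_of_eq {p q : ℝ} (hp : -1 < p)
    (h : Gamma ((p + 1) / 2) = √π / 2) (hpq : p ≤ q) (hq : q ≤ 2) :
    Gamma ((q + 1) / 2) ≤ √π / 2 := by
  have := convexOn_Gamma.le_max_of_mem_Icc (x := (p + 1) / 2) (y := 3 / 2) (z := (q + 1) / 2)
    (show (0 : ℝ) < (p + 1) / 2 by linarith) (show (0 : ℝ) < 3 / 2 by norm_num)
    ⟨by linarith, by linarith⟩
  rwa [h, Gamma_three_half, max_self] at this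

lemma nine_fifths_le_of_mem_criticalSet {p : ℝ} (hp : p ∈ criticalSet) : 9 / 5 ≤ p := by
  by_contra! h
  have := Gamma_add_one_div_two_le_of_eq (by linarith [hp.1]) hp.2.2 h.le (by norm_num)
  rw [show ((9 : ℝ) / 5 + 1) / 2 = 7 / 5 by norm_num, ← Gamma_three_half] at this
  exact this.not_gt Gamma_three_half_lt

lemma bddBelow_criticalSet : BddBelow criticalSet :=
  ⟨9 / 5, fun _ hp ↦ nine_fifths_le_of_mem_criticalSet hp⟩

lemma nine_fifths_le_khintchineP0 : 9 / 5 ≤ khintchineP0 :=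
  le_csInf criticalSet_nonempty fun _ hp ↦ nine_fifths_le_of_mem_criticalSet hp

lemma khintchineP0_lt_two : khintchineP0 < 2 :=
  have ⟨_, hp⟩ := criticalSet_nonempty
  (csInf_le bddBelow_criticalSet hp).trans_lt hp.2.1

lemma Gamma_khintchineP0 : Gamma ((khintchineP0 + 1) / 2) = √π / 2 := by
  have hcont : ContinuousOn (fun p : ℝ ↦ Gamma ((p + 1) / 2)) (Set.Icc 1 2) :=
    differentiableOn_Gamma_Ioi.continuousOn.comp (by fun_prop) fun p hp ↦
      show (0 : ℝ) < (p + 1) / 2 by linarith [hp.1]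
  have hclosed := hcont.preimage_isClosed_of_isClosed isClosed_Icc
    (isClosed_singleton (x := √π / 2))
  have hsub : criticalSet ⊆ Set.Icc 1 2 ∩ (fun p ↦ Gamma ((p + 1) / 2)) ⁻¹' {√π / 2} :=
    fun p hp ↦ ⟨⟨hp.1.le, hp.2.1.le⟩, hp.2.2⟩
  exact (closure_minimal hsub hclosed
    (csInf_mem_closure criticalSet_nonempty bddBelow_criticalSet)).2

lemma gaussMoment_le_iff {p : ℝ} :
    gaussMoment p ≤ 2 ^ (p / 2 - 1) ↔ Gamma ((p + 1) / 2) ≤ √π / 2 := by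
  rw [gaussMoment, rpow_sub_one two_ne_zero, div_le_div_iff₀ (by positivity) (by positivity),
    mul_assoc, mul_le_mul_iff_right₀ (by positivity), le_div_iff₀ two_pos]

lemma gaussMoment_khintchineP0 : gaussMoment khintchineP0 = 2 ^ (khintchineP0 / 2 - 1) := by
  rw [gaussMoment, Gamma_khintchineP0, rpow_sub_one two_ne_zero]
  have := sqrt_pos.2 pi_pos
  field_simp

lemma gaussMoment_le {p : ℝ} (hp : khintchineP0 ≤ p) (hp' : p ≤ 2) :
    gaussMoment p ≤ 2 ^ (p / 2 - 1) :=
  gaussMoment_le_iff.2 <| Gamma_add_one_div_two_le_of_eq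
    (by linarith [nine_fifths_le_khintchineP0]) Gamma_khintchineP0 hp hp'

end CriticalExponent

/-! ### The Khintchine inequality with optimal constants -/

section Khintchine

variable {r : ℝ}

lemma two_rpow_mul_le_signMean (hr : 0 < r) (hr' : r ≤ khintchineP0) (l : List ℝ) :
    2 ^ (r / 2 - 1) * (l.map (· ^ 2)).sum ^ (r / 2) ≤ signMean (|·| ^ r) 0 l := by
  have hp₂ := khintchineP0_lt_two
  have hcrit := gaussMoment_mul_rpow_le_signMean nine_fifths_le_khintchineP0 hp₂
    (gaussMoment_le le_rfl hp₂.le) l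
  rw [gaussMoment_khintchineP0] at hcrit
  have hsq := signMean_abs_rpow_two 0 l
  have hM : 0 ≤ signMean (|·| ^ r) 0 l := signMean_nonneg (fun x ↦ by positivity) 0 l
  obtain rfl | hr' := hr'.eq_or_lt
  · exact hcrit
  set S := (l.map (· ^ 2)).sum
  set p := khintchineP0
  obtain hS | hS : 0 = S ∨ 0 < S := (sum_map_sq_nonneg l).eq_or_lt
  · rwa [← hS, zero_rpow (by positivity), mul_zero]
  set θ : ℝ := (2 - p) / (2 - r)
  have hθr : θ * (2 - r) = 2 - p := div_mul_cancel₀ _ (by linarith)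
  have hθ : 0 < θ := div_pos (by linarith) (by linarith)
  have hθ' : θ < 1 := (div_lt_one (by linarith)).2 (by linarith)
  have hpow (x : ℝ) : |x| ^ p = (|x| ^ r) ^ θ * (|x| ^ (2 : ℝ)) ^ (1 - θ) := by
    rw [← rpow_mul (abs_nonneg x), ← rpow_mul (abs_nonneg x),
      ← rpow_add_of_nonneg (abs_nonneg x) (by positivity) (by linarith)]
    congr 1
    linarith
  have hinterp : signMean (|·| ^ p) 0 l ≤ signMean (|·| ^ r) 0 l ^ θ * S ^ (1 - θ) := by
    have := signMean_rpow_mul_rpow_le (f := (|·| ^ r)) (g := (|·| ^ (2 : ℝ)))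
      (fun x ↦ by positivity) (fun x ↦ by positivity) hθ hθ' 0 l
    rwa [hsq, zero_pow two_ne_zero, zero_add, ← funext hpow] at this
  refine (rpow_le_rpow_iff (by positivity) hM hθ).1
    (le_of_mul_le_mul_right ?_ (rpow_pos_of_pos hS (1 - θ)))
  calc (2 ^ (r / 2 - 1) * S ^ (r / 2)) ^ θ * S ^ (1 - θ) = 2 ^ (p / 2 - 1) * S ^ (p / 2) := by
        rw [mul_rpow (by positivity) (by positivity), ← rpow_mul two_pos.le, ← rpow_mul hS.le,
          mul_assoc, ← rpow_add hS]
        congr 2 <;> linarith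
    _ ≤ _ := hcrit.trans hinterp

lemma khintchineA_nonneg (r : ℝ) : 0 ≤ khintchineA r := by
  unfold khintchineA
  split_ifs with h
  · positivity
  · have hr : 0 < r := by linarith [nine_fifths_le_khintchineP0]
    positivity
  · exact zero_le_one

lemma khintchineA_rpow_of_le (hr : r ≠ 0) (hr' : r ≤ khintchineP0) :
    khintchineA r ^ r = (2 ^ (r / 2 - 1))⁻¹ := by
  rw [khintchineA, if_pos hr', ← rpow_mul two_pos.le, ← rpow_neg two_pos.le]
  congr 1
  field_simp
  ring

lemma khintchineA_rpow_of_lt (hr : khintchineP0 < r) (hr' : r < 2) :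
    khintchineA r ^ r = (gaussMoment r)⁻¹ := by
  have hr₀ : 0 < r := by linarith [nine_fifths_le_khintchineP0]
  rw [khintchineA, if_neg hr.not_ge, if_pos hr', mul_rpow (by positivity) (by positivity),
    ← rpow_mul (by positivity), show -(1 / r) * r = -1 by field_simp, rpow_neg_one, one_div,
    inv_rpow (by positivity), sqrt_eq_rpow, ← rpow_mul two_pos.le, ← mul_inv, gaussMoment,
    one_div_mul_eq_div, ← mul_div_assoc]

lemma khintchineA_two : khintchineA 2 = 1 := by
  rw [khintchineA, if_neg khintchineP0_lt_two.not_ge, if_neg (lt_irrefl _)]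

theorem rpow_le_khintchineA_rpow_mul_signMean (hr : 0 < r) (hr' : r ≤ 2) (l : List ℝ) :
    (l.map (· ^ 2)).sum ^ (r / 2) ≤ khintchineA r ^ r * signMean (|·| ^ r) 0 l := by
  rcases le_or_gt r khintchineP0 with hle | hlt
  · rw [khintchineA_rpow_of_le hr.ne' hle, inv_mul_eq_div, le_div_iff₀' (by positivity)]
    exact two_rpow_mul_le_signMean hr hle l
  obtain rfl | hr₂ := hr'.eq_or_lt
  · rw [khintchineA_two, one_rpow, one_mul, signMean_abs_rpow_two]
    norm_num
  · rw [khintchineA_rpow_of_lt hlt hr₂, inv_mul_eq_div,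
      le_div_iff₀' (gaussMoment_pos (by linarith))]
    exact gaussMoment_mul_rpow_le_signMean (nine_fifths_le_khintchineP0.trans hlt.le) hr₂
      (gaussMoment_le hlt.le hr') l

end Khintchine

/-! ### Bilinear forms -/

section Lp

variable {n : ℕ} {p r : ℝ}

lemma lpNorm_nonneg (p : ℝ) (x : Fin n → ℝ) : 0 ≤ lpNorm p x := by
  unfold _root_.lpNorm
  positivity

lemma lpNorm_rpow (hp : p ≠ 0) (x : Fin n → ℝ) : lpNorm p x ^ p = ∑ i, |x i| ^ p := by
  rw [_root_.lpNorm, ← rpow_mul (by positivity), one_div_mul_cancel hp, rpow_one]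

lemma abs_le_lpNorm (hp : 0 < p) (x : Fin n → ℝ) (i : Fin n) : |x i| ≤ lpNorm p x := by
  rw [← rpow_le_rpow_iff (abs_nonneg _) (lpNorm_nonneg p x) hp, lpNorm_rpow hp.ne']
  exact Finset.single_le_sum (f := fun i ↦ |x i| ^ p) (fun j _ ↦ by positivity) (Finset.mem_univ i)

lemma abs_le_linfNorm (y : Fin n → ℝ) (j : Fin n) : |y j| ≤ linfNorm y :=
  le_ciSup (f := fun j ↦ |y j|) (Set.finite_range _).bddAbove j

lemma exists_lpNorm_le_one_sum_mul_eq (hpr : p.HolderConjugate r) (z : Fin n → ℝ) :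
    ∃ x : Fin n → ℝ, lpNorm p x ≤ 1 ∧ ∑ i, x i * z i = lpNorm r z := by
  obtain ⟨g, hg, hgz⟩ := (NNReal.isGreatest_Lp Finset.univ (fun i ↦ ‖z i‖₊) hpr.symm).1
  replace hg : ∑ i, (g i : ℝ) ^ p ≤ 1 := mod_cast hg
  replace hgz : ∑ i, |z i| * g i = lpNorm r z := by
    simpa [_root_.lpNorm] using congrArg NNReal.toReal hgz
  refine ⟨fun i ↦ SignType.sign (z i) * g i, rpow_le_one (by positivity) (le_trans ?_ hg)
    (one_div_nonneg.2 hpr.nonneg), ?_⟩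
  · have hsign (i : Fin n) : |((SignType.sign (z i) : SignType) : ℝ)| ≤ 1 := by
      rcases SignType.sign (z i) with _ | _ | _ <;> simp
    refine Finset.sum_le_sum fun i _ ↦ rpow_le_rpow (abs_nonneg _) ?_ hpr.nonneg
    rw [abs_mul, NNReal.abs_eq]
    exact mul_le_of_le_one_left (g i).2 (hsign i)
  · rw [← hgz]
    exact Finset.sum_congr rfl fun i _ ↦ by rw [mul_right_comm, sign_mul_self]

lemma Lp_sum_le {ι κ : Type*} [Fintype κ] {q : ℝ} (hq : 1 ≤ q) {b : ι → κ → ℝ}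
    (hb : ∀ i j, 0 ≤ b i j) (s : Finset ι) :
    (∑ j, (∑ i ∈ s, b i j) ^ q) ^ (1 / q) ≤ ∑ i ∈ s, (∑ j, b i j ^ q) ^ (1 / q) := by
  classical
  have hq₀ : 0 < q := by linarith
  induction s using Finset.induction_on with
  | empty => simp [zero_rpow hq₀.ne', zero_rpow (inv_pos.2 hq₀).ne']
  | insert i s hi ih =>
    simp only [Finset.sum_insert hi]
    exact (Lp_add_le_of_nonneg Finset.univ hq (fun j _ ↦ hb i j)
      (fun j _ ↦ Finset.sum_nonneg fun k _ ↦ hb k j)).trans (by gcongr)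

end Lp

section Bilinear

variable {N n : ℕ} {p r : ℝ}

lemma sum_sum_rpow_le_khintchineA_rpow_mul_signMean {ι : Type*} [Fintype ι] (hr : 0 < r)
    (hr' : r ≤ 2) (a : Fin n → ι → ℝ) :
    (∑ j, (∑ i, |a j i| ^ r) ^ (2 / r)) ^ (r / 2) ≤
      khintchineA r ^ r * signMean (fun v : ι → ℝ ↦ ∑ i, |v i| ^ r) 0 (List.ofFn a) := by
  have hsq (i : ι) (j : Fin n) : (|a j i| ^ r) ^ (2 / r) = a j i ^ 2 := by
    rw [← rpow_mul (abs_nonneg _), mul_div_cancel₀ _ hr.ne', rpow_two, sq_abs]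
  have hrow (i : ι) : (∑ j, a j i ^ 2) ^ (r / 2) ≤
      khintchineA r ^ r * signMean (fun v : ι → ℝ ↦ |v i| ^ r) 0 (List.ofFn a) := by
    have hmap := signMean_map (Pi.evalAddMonoidHom (fun _ : ι ↦ ℝ) i) (|·| ^ r) 0 (List.ofFn a)
    have hkhin := rpow_le_khintchineA_rpow_mul_signMean hr hr' (List.ofFn fun j ↦ a j i)
    rw [List.map_ofFn, List.sum_ofFn] at hkhin
    rw [List.map_ofFn, map_zero] at hmap
    exact hkhin.trans_eq (congrArg _ hmap)
  calc (∑ j, (∑ i, |a j i| ^ r) ^ (2 / r)) ^ (r / 2)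
      ≤ ∑ i, (∑ j, a j i ^ 2) ^ (r / 2) := by
        have := Lp_sum_le ((one_le_div hr).2 hr') (b := fun i j ↦ |a j i| ^ r)
          (fun i j ↦ by positivity) Finset.univ
        simpa only [hsq, one_div_div] using this
    _ ≤ _ := Finset.sum_le_sum fun i _ ↦ hrow i
    _ = _ := by rw [signMean_sum, Finset.mul_sum]

lemma apply_eq_sum_mul_apply_single {ι : Type*} [Fintype ι] [DecidableEq ι]
    (f : (ι → ℝ) →ₗ[ℝ] ℝ) (x : ι → ℝ) : f x = ∑ i, x i * f (Pi.single i 1) := by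
  conv_lhs => rw [← Finset.univ_sum_single x, map_sum]
  refine Finset.sum_congr rfl fun i _ ↦ ?_
  rw [← smul_eq_mul, ← map_smul, ← Pi.single_smul, smul_eq_mul, mul_one]

lemma abs_apply_le_sum_abs_apply_single {ι : Type*} [Fintype ι] [DecidableEq ι]
    (f : (ι → ℝ) →ₗ[ℝ] ℝ) {x : ι → ℝ} (hx : ∀ i, |x i| ≤ 1) :
    |f x| ≤ ∑ i, |f (Pi.single i 1)| := by
  rw [apply_eq_sum_mul_apply_single]
  refine (Finset.abs_sum_le_sum_abs _ _).trans (Finset.sum_le_sum fun i _ ↦ ?_)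
  rw [abs_mul]
  exact mul_le_of_le_one_left (abs_nonneg _) (hx i)

variable (T : (Fin N → ℝ) →ₗ[ℝ] (Fin n → ℝ) →ₗ[ℝ] ℝ)

lemma abs_apply_le_bilinOpNorm (hp : 0 < p) {x : Fin N → ℝ} {y : Fin n → ℝ}
    (hx : lpNorm p x ≤ 1) (hy : linfNorm y ≤ 1) : |T x y| ≤ bilinOpNorm p T := by
  refine le_csSup ⟨∑ i, ∑ j, |T (Pi.single i 1) (Pi.single j 1)|, ?_⟩ ⟨x, y, hx, hy, rfl⟩
  rintro c ⟨x, y, hx, hy, rfl⟩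
  exact (abs_apply_le_sum_abs_apply_single (T.flip y) fun i ↦ (abs_le_lpNorm hp x i).trans hx).trans
    (Finset.sum_le_sum fun i _ ↦ abs_apply_le_sum_abs_apply_single (T (Pi.single i 1))
      fun j ↦ (abs_le_linfNorm y j).trans hy)

lemma bilinOpNorm_nonneg (p : ℝ) : 0 ≤ bilinOpNorm p T := by
  refine Real.sSup_nonneg ?_
  rintro c ⟨x, y, -, -, rfl⟩
  exact abs_nonneg _

lemma lpNorm_apply_single_le_bilinOpNorm (hpr : p.HolderConjugate r) {y : Fin n → ℝ}
    (hy : linfNorm y ≤ 1) : lpNorm r (fun i ↦ T (Pi.single i 1) y) ≤ bilinOpNorm p T := by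
  obtain ⟨x, hx, hxz⟩ := exists_lpNorm_le_one_sum_mul_eq hpr fun i ↦ T (Pi.single i 1) y
  calc lpNorm r (fun i ↦ T (Pi.single i 1) y) = T x y :=
        hxz.symm.trans (apply_eq_sum_mul_apply_single (T.flip y) x).symm
    _ ≤ bilinOpNorm p T := (le_abs_self _).trans (abs_apply_le_bilinOpNorm T hpr.pos hx hy)

lemma signMean_sum_abs_rpow_le_bilinOpNorm_rpow (hpr : p.HolderConjugate r) :
    signMean (fun v : Fin N → ℝ ↦ ∑ i, |v i| ^ r) 0
      (List.ofFn fun j i ↦ T (Pi.single i 1) (Pi.single j 1)) ≤ bilinOpNorm p T ^ r := by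
  obtain ⟨y, hy, hle⟩ := exists_signMean_le (fun v : Fin N → ℝ ↦ ∑ i, |v i| ^ r) 0
    fun j i ↦ T (Pi.single i 1) (Pi.single j 1)
  have hrow : 0 + ∑ j, y j • (fun i ↦ T (Pi.single i 1) (Pi.single j 1)) =
      fun i ↦ T (Pi.single i 1) y := by
    ext i
    rw [apply_eq_sum_mul_apply_single (T (Pi.single i 1))]
    simp
  rw [hrow, ← lpNorm_rpow hpr.symm.ne_zero fun i ↦ T (Pi.single i 1) y] at hle
  exact hle.trans <| rpow_le_rpow (lpNorm_nonneg _ _)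
    (lpNorm_apply_single_le_bilinOpNorm T hpr (Real.iSup_le hy zero_le_one)) hpr.symm.nonneg

theorem sum_rpow_le_khintchineA_mul_bilinOpNorm (hpr : p.HolderConjugate r) (hr : r ≤ 2) :
    (∑ j, (∑ i, |T (Pi.single i 1) (Pi.single j 1)| ^ r) ^ (2 / r)) ^ ((1 : ℝ) / 2) ≤
      khintchineA r * bilinOpNorm p T := by
  have hr₀ := hpr.symm.pos
  have hA := khintchineA_nonneg r
  have hT := bilinOpNorm_nonneg T p
  rw [← rpow_le_rpow_iff (by positivity) (by positivity) hr₀, ← rpow_mul (by positivity),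
    one_div_mul_eq_div, mul_rpow hA hT]
  calc _ ≤ _ := sum_sum_rpow_le_khintchineA_rpow_mul_signMean hr₀ hr
        fun j i ↦ T (Pi.single i 1) (Pi.single j 1)
    _ ≤ _ := by
        gcongr
        exact signMean_sum_abs_rpow_le_bilinOpNorm_rpow T hpr

end Bilinear

end Khintchine

theorem mixed_littlewood_bilinear_swapped_general (p : ℝ) (hp : 2 ≤ p) {N n : ℕ}
    (T : (Fin N → ℝ) →ₗ[ℝ] (Fin n → ℝ) →ₗ[ℝ] ℝ) :
    (∑ j : Fin n, (∑ i : Fin N, |T (Pi.single i 1) (Pi.single j 1)| ^ (p / (p - 1)))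
        ^ (2 * (p - 1) / p)) ^ ((1 : ℝ) / 2)
      ≤ khintchineA (p / (p - 1)) * bilinOpNorm p T := by
  have hpr : p.HolderConjugate (p / (p - 1)) := HolderConjugate.conjExponent (by linarith)
  have hr : p / (p - 1) ≤ 2 := by
    rw [div_le_iff₀ (by linarith)]
    linarith
  rw [← div_div_eq_mul_div]
  exact Khintchine.sum_rpow_le_khintchineA_mul_bilinOpNorm T hpr hr

/-- Mixed `(ℓ₂, ℓ_{p/(p-1)})`-Littlewood inequality with constant `A_{p/(p-1)}`. -/
theorem mixed_littlewood_bilinear_swapped (p : ℝ) (hp : 2 ≤ p) (n : ℕ)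
    (T : (Fin n → ℝ) →ₗ[ℝ] (Fin n → ℝ) →ₗ[ℝ] ℝ) :
    (∑ j : Fin n, (∑ i : Fin n, |T (Pi.single i 1) (Pi.single j 1)| ^ (p / (p - 1)))
        ^ (2 * (p - 1) / p)) ^ ((1 : ℝ) / 2)
      ≤ khintchineA (p / (p - 1)) * bilinOpNorm p T :=
  mixed_littlewood_bilinear_swapped_general p hp T
end

section
/- Let p ∈ [2, ∞) be a real number and let C ≥ 0 be a constant such that for every n ∈ ℕ and every bilinear form T : ℝⁿ × ℝⁿ → ℝ one has (∑_{i=1}^{n} (∑_{j=1}^{n} |T(e_i,e_j)|²)^{(1/2)·(p/(p−1))})^{(p−1)/p} ≤ C · ‖T‖_{p,∞}. Then C ≥ A_{p/(p−1)}; that is, the optimal constant in the mixed (ℓ_{p/(p−1)}, ℓ₂)-Littlewood inequality is exactly A_{p/(p−1)}. -/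
open MeasureTheory Real Filter

/-!
A mixed Littlewood inequality implies the Khintchine inequality with the same constant. Given
`a : Fin n → ℝ`, take the matrix whose rows are all the sign changes `(ε j • a j)` of `a`: its rows
all have the Euclidean norm of `a`, and by duality and Kahane's contraction principle its
`(p, ∞)`-norm is, up to the number of rows, the `q`-th moment of `∑ j, ε j • a j`, where
`q = p / (p - 1)`.

A Khintchine constant for the exponent `q` is then tested on `a = (1)`, on `a = (1, 1)`, which gives
`2 ^ (1 / q - 1 / 2)`, and on `a = (n ^ (-1 / 2), …, n ^ (-1 / 2))`. For the last vector the central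
limit theorem turns the moments into the Gaussian ones; they converge for `q < 2` because the second
moments are bounded.
-/

open scoped BigOperators

section Convexity

variable {ι : Type*}

theorem mem_convexHull_range_units_of_abs_le_one [Finite ι] {y : ι → ℝ} (hy : ∀ j, |y j| ≤ 1) :
    y ∈ convexHull ℝ (Set.range fun (ε : ι → ℤˣ) j ↦ ((ε j : ℤ) : ℝ)) := by
  have hcube : y ∈ convexHull ℝ (Set.univ.pi fun _ ↦ {-1, 1}) := by
    rw [convexHull_pi]
    intro j _
    rw [convexHull_pair, segment_eq_Icc (by norm_num)]
    exact abs_le.1 (hy j)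
  refine convexHull_mono (fun z hz ↦ ?_) hcube
  have hsign (j : ι) : ∃ u : ℤˣ, ((u : ℤ) : ℝ) = z j := by
    rcases hz j trivial with h | h
    · exact ⟨-1, by simp [h]⟩
    · exact ⟨1, by simpa using h.symm⟩
  choose ε hε using hsign
  exact ⟨ε, funext hε⟩

/-- Kahane's contraction principle. The left-hand side is convex in `y`, so it is enough to treat
`y ∈ {-1, 1}^ι`, and multiplying `ε` by such a `y` only permutes the terms of the average. -/
theorem expect_sum_units_smul_smul_le [Fintype ι] [DecidableEq ι] {E : Type*} [AddCommGroup E]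
    [Module ℝ E] {φ : E → ℝ} (hφ : ConvexOn ℝ Set.univ φ) (x : ι → E) {y : ι → ℝ}
    (hy : ∀ j, |y j| ≤ 1) :
    𝔼 ε : ι → ℤˣ, φ (∑ j, ε j • y j • x j) ≤ 𝔼 ε : ι → ℤˣ, φ (∑ j, ε j • x j) := by
  have hconv : ConvexOn ℝ Set.univ fun y : ι → ℝ ↦ ∑ ε : ι → ℤˣ, φ (∑ j, ε j • y j • x j) := by
    simp_rw [← Finset.sum_apply _ _ fun (ε : ι → ℤˣ) (y : ι → ℝ) ↦ φ (∑ j, ε j • y j • x j)]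
    refine Finset.sum_induction _ (ConvexOn ℝ Set.univ) (fun _ _ ↦ ConvexOn.add)
      (convexOn_const 0 convex_univ) fun ε _ ↦ ?_
    simpa only [Function.comp_def, Fintype.linearCombination_apply, smul_comm (ε _),
      Set.preimage_univ] using hφ.comp_linearMap (Fintype.linearCombination ℝ fun j ↦ ε j • x j)
  obtain ⟨_, ⟨η, rfl⟩, hη⟩ := hconv.exists_ge_of_mem_convexHull (Set.subset_univ _)
    (mem_convexHull_range_units_of_abs_le_one hy)
  simp only [Fintype.expect_eq_sum_div_card]
  gcongr ?_ / _
  refine hη.trans_eq (Fintype.sum_equiv (Equiv.mulRight η) _ _ fun ε ↦ ?_)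
  simp [mul_smul, Units.smul_def, ← Int.cast_smul_eq_zsmul ℝ]

theorem convexOn_norm_rpow {E : Type*} [SeminormedAddCommGroup E] [NormedSpace ℝ E] {q : ℝ}
    (hq : 1 ≤ q) : ConvexOn ℝ Set.univ fun x : E ↦ ‖x‖ ^ q := by
  refine ⟨convex_univ, fun x _ y _ a b ha hb hab ↦ ?_⟩
  calc ‖a • x + b • y‖ ^ q ≤ (a * ‖x‖ + b * ‖y‖) ^ q := by
        gcongr
        exact convexOn_univ_norm.2 trivial trivial ha hb hab
    _ ≤ a * ‖x‖ ^ q + b * ‖y‖ ^ q :=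
        (convexOn_rpow hq).2 (norm_nonneg x) (norm_nonneg y) ha hb hab

end Convexity

section BilinOpNorm

theorem bilinOpNorm_nonneg (p : ℝ) {N n : ℕ} (T : (Fin N → ℝ) →ₗ[ℝ] (Fin n → ℝ) →ₗ[ℝ] ℝ) :
    0 ≤ bilinOpNorm p T :=
  Real.sSup_nonneg fun _ ⟨_, _, _, _, hc⟩ ↦ hc ▸ abs_nonneg _

theorem abs_apply_le_linfNorm {n : ℕ} (y : Fin n → ℝ) (j : Fin n) : |y j| ≤ linfNorm y :=
  le_ciSup (f := fun i ↦ |y i|) (Set.finite_range _).bddAbove j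

theorem abs_sum_mul_le_lpNorm_mul_lpNorm {p q : ℝ} (hpq : p.HolderConjugate q) {n : ℕ}
    (x y : Fin n → ℝ) : |∑ i, x i * y i| ≤ _root_.lpNorm p x * _root_.lpNorm q y := by
  calc |∑ i, x i * y i| ≤ ∑ i, |x i| * |y i| := by
        simpa only [abs_mul] using Finset.abs_sum_le_sum_abs (fun i ↦ x i * y i) Finset.univ
    _ ≤ _root_.lpNorm p x * _root_.lpNorm q y := by
        simpa only [_root_.lpNorm, abs_abs] using
          Real.inner_le_Lp_mul_Lq Finset.univ (fun i ↦ |x i|) (fun i ↦ |y i|) hpq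

theorem zero_le_lpNorm (p : ℝ) {n : ℕ} (x : Fin n → ℝ) : 0 ≤ _root_.lpNorm p x := by
  unfold _root_.lpNorm
  positivity

theorem bilinOpNorm_le {p q : ℝ} (hpq : p.HolderConjugate q) {N n : ℕ}
    (T : (Fin N → ℝ) →ₗ[ℝ] (Fin n → ℝ) →ₗ[ℝ] ℝ) {M : ℝ}
    (hM : ∀ y : Fin n → ℝ, (∀ j, |y j| ≤ 1) →
      _root_.lpNorm q (fun i ↦ T (Pi.single i 1) y) ≤ M) :
    bilinOpNorm p T ≤ M := by
  have hM0 : 0 ≤ M := (zero_le_lpNorm q _).trans (hM 0 (by simp))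
  refine Real.sSup_le ?_ hM0
  rintro _ ⟨x, y, hx, hy, rfl⟩
  have hT : T x y = ∑ i, x i * T (Pi.single i 1) y := by
    conv_lhs => rw [pi_eq_sum_univ' x]
    simp
  calc |T x y| ≤ _root_.lpNorm p x * _root_.lpNorm q (fun i ↦ T (Pi.single i 1) y) :=
        hT ▸ abs_sum_mul_le_lpNorm_mul_lpNorm hpq _ _
    _ ≤ 1 * M := by
        gcongr
        · exact zero_le_lpNorm _ _
        · exact hM y fun j ↦ (abs_apply_le_linfNorm y j).trans hy
    _ = M := one_mul M

end BilinOpNorm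

/-- `C` is an admissible constant in the mixed `(ℓ_{p/(p-1)}, ℓ₂)`-Littlewood inequality for
bilinear forms on `ℝⁿ × ℝⁿ`; the exponents are written out in terms of `p` only. -/
def IsMixedLittlewoodConst (p C : ℝ) : Prop :=
  ∀ (n : ℕ) (T : (Fin n → ℝ) →ₗ[ℝ] (Fin n → ℝ) →ₗ[ℝ] ℝ),
    (∑ i : Fin n, (∑ j : Fin n, |T (Pi.single i 1) (Pi.single j 1)| ^ (2 : ℝ))
        ^ ((1 / 2) * (p / (p - 1)))) ^ ((p - 1) / p)
      ≤ C * bilinOpNorm p T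

/-- `C` is an admissible constant in the Khintchine inequality bounding the `ℓ₂` norm by the `q`-th
moment of a Rademacher sum. The Rademacher variables are the coordinates of a uniformly random
`ε : Fin n → ℤˣ`, so that the moment is a finite average. -/
def IsKhintchineConst (q C : ℝ) : Prop :=
  ∀ (n : ℕ) (a : Fin n → ℝ),
    √(∑ j, a j ^ 2) ≤ C * (𝔼 ε : Fin n → ℤˣ, |∑ j, ε j • a j| ^ q) ^ (1 / q)

namespace IsMixedLittlewoodConst

variable {p q C M : ℝ}

theorem nonneg (h : IsMixedLittlewoodConst p C) : 0 ≤ C := by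
  let T := Matrix.toBilin' (1 : Matrix (Fin 1) (Fin 1) ℝ)
  have hone : 1 ≤ C * bilinOpNorm p T := by simpa [T] using h 1 T
  exact (pos_of_mul_pos_left (one_pos.trans_le hone) (bilinOpNorm_nonneg p T)).le

theorem lp_sum_sq_le_of_square (h : IsMixedLittlewoodConst p C) (hpq : p.HolderConjugate q)
    {ι : Type*} [Fintype ι] (A : Matrix ι ι ℝ)
    (hM : ∀ y : ι → ℝ, (∀ j, |y j| ≤ 1) → (∑ i, |(A.mulVec y) i| ^ q) ^ (1 / q) ≤ M) :
    (∑ i, √(∑ j, A i j ^ 2) ^ q) ^ (1 / q) ≤ C * M := by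
  classical
  let e := Fintype.equivFin ι
  let T := Matrix.toBilin' (A.submatrix e.symm e.symm)
  have hnorm : bilinOpNorm p T ≤ M := by
    refine bilinOpNorm_le hpq T fun y hy ↦ ?_
    have hrow (i : ι) : T (Pi.single (e i) 1) y = A.mulVec (y ∘ e) i := by
      simp only [T, Matrix.toBilin'_apply', single_one_dotProduct, Matrix.submatrix_mulVec_equiv]
      simp
    simpa only [_root_.lpNorm, ← e.sum_comp, hrow] using hM (y ∘ e) fun j ↦ hy (e j)
  have hT : (∑ i, (∑ j, |T (Pi.single i 1) (Pi.single j 1)| ^ (2 : ℝ)) ^ ((1 / 2) * (p / (p - 1))))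
      ^ ((p - 1) / p) = (∑ i, √(∑ j, A i j ^ 2) ^ q) ^ (1 / q) := by
    have hreindex (i : ι) : ∑ j, A i (e.symm j) ^ 2 = ∑ j, A i j ^ 2 :=
      e.symm.sum_comp fun j ↦ A i j ^ 2
    rw [← one_div_div p, ← hpq.conjugate_eq, ← e.sum_comp]
    simp only [T, Matrix.toBilin'_single, Real.rpow_two, sq_abs, Matrix.submatrix_apply,
      Equiv.symm_apply_apply, hreindex, Real.sqrt_eq_rpow,
      ← Real.rpow_mul (Finset.sum_nonneg fun _ _ ↦ sq_nonneg _)]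
  calc _ ≤ C * bilinOpNorm p T := hT ▸ h _ T
    _ ≤ C * M := mul_le_mul_of_nonneg_left hnorm h.nonneg

theorem lp_sum_sq_le (h : IsMixedLittlewoodConst p C) (hpq : p.HolderConjugate q)
    {ι κ : Type*} [Fintype ι] [Fintype κ] (A : Matrix ι κ ℝ)
    (hM : ∀ y : κ → ℝ, (∀ j, |y j| ≤ 1) → (∑ i, |(A.mulVec y) i| ^ q) ^ (1 / q) ≤ M) :
    (∑ i, √(∑ j, A i j ^ 2) ^ q) ^ (1 / q) ≤ C * M := by
  have hq : q ≠ 0 := hpq.symm.ne_zero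
  have := h.lp_sum_sq_le_of_square hpq (Matrix.fromBlocks 0 A 0 0) (M := M) fun y hy ↦ by
    simpa [Matrix.fromBlocks_mulVec, hq] using hM (y ∘ Sum.inr) fun j ↦ hy _
  simpa [hq] using this

theorem lp_expect_sq_le (h : IsMixedLittlewoodConst p C) (hpq : p.HolderConjugate q)
    {ι κ : Type*} [Fintype ι] [Nonempty ι] [Fintype κ] (A : Matrix ι κ ℝ)
    (hM : ∀ y : κ → ℝ, (∀ j, |y j| ≤ 1) → (𝔼 i, |(A.mulVec y) i| ^ q) ^ (1 / q) ≤ M) :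
    (𝔼 i, √(∑ j, A i j ^ 2) ^ q) ^ (1 / q) ≤ C * M := by
  have hcard : 0 < (Fintype.card ι : ℝ) ^ (1 / q) := by positivity
  have hsum {f : ι → ℝ} (hf : ∀ i, 0 ≤ f i) :
      (∑ i, f i) ^ (1 / q) = (Fintype.card ι : ℝ) ^ (1 / q) * (𝔼 i, f i) ^ (1 / q) := by
    rw [← Fintype.card_mul_expect, Real.mul_rpow (by positivity)
      (Finset.expect_nonneg fun i _ ↦ hf i)]
  have hA := h.lp_sum_sq_le hpq A (M := (Fintype.card ι : ℝ) ^ (1 / q) * M) fun y hy ↦ by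
    rw [hsum fun _ ↦ by positivity]
    gcongr
    exact hM y hy
  rw [hsum fun _ ↦ by positivity, mul_left_comm] at hA
  exact le_of_mul_le_mul_left hA hcard

theorem isKhintchineConst (h : IsMixedLittlewoodConst p C) (hpq : p.HolderConjugate q) :
    IsKhintchineConst q C := by
  intro n a
  have hrow (ε : Fin n → ℤˣ) : ∑ j, (ε j • a j) ^ 2 = ∑ j, a j ^ 2 := by
    simp [smul_pow]
  have hsign := h.lp_expect_sq_le hpq (.of fun (ε : Fin n → ℤˣ) j ↦ ε j • a j)
    (M := (𝔼 ε : Fin n → ℤˣ, |∑ j, ε j • a j| ^ q) ^ (1 / q)) fun y hy ↦ by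
    refine Real.rpow_le_rpow (Finset.expect_nonneg fun _ _ ↦ by positivity) ?_
      hpq.symm.one_div_nonneg
    simpa [Matrix.mulVec, dotProduct, mul_comm, mul_smul_comm] using
      expect_sum_units_smul_smul_le (convexOn_norm_rpow hpq.symm.lt.le) a hy
  simpa [Matrix.of_apply, hrow, ← Real.rpow_mul, hpq.symm.ne_zero] using hsign

end IsMixedLittlewoodConst

section MomentConvergence

open scoped Topology

theorem rpow_le_min_rpow_add {q r K t : ℝ} (hqr : q ≤ r) (hK : 0 < K) (ht : 0 ≤ t) :
    t ^ q ≤ min t K ^ q + K ^ (q - r) * t ^ r := by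
  rcases le_or_gt t K with h | h
  · rw [min_eq_left h]
    exact le_add_of_nonneg_right (by positivity)
  · have ht0 : 0 < t := hK.trans h
    calc t ^ q = t ^ (q - r) * t ^ r := by rw [← Real.rpow_add ht0, sub_add_cancel]
      _ ≤ K ^ (q - r) * t ^ r := by
          gcongr ?_ * _
          exact Real.rpow_le_rpow_of_nonpos hK h.le (sub_nonpos.2 hqr)
      _ ≤ min t K ^ q + K ^ (q - r) * t ^ r :=
          le_add_of_nonneg_left (Real.rpow_nonneg (le_min ht hK.le) q)

theorem min_rpow_le_rpow {q K t : ℝ} (hq : 0 ≤ q) (hK : 0 ≤ K) (ht : 0 ≤ t) :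
    min t K ^ q ≤ t ^ q :=
  Real.rpow_le_rpow (le_min ht hK) (min_le_left t K) hq

variable {E : Type*} [SeminormedAddCommGroup E] {q r K : ℝ}

theorem norm_min_norm_rpow_le (hq : 0 ≤ q) (hK : 0 ≤ K) (x : E) : ‖min ‖x‖ K ^ q‖ ≤ K ^ q := by
  have hmin : 0 ≤ min ‖x‖ K := le_min (norm_nonneg x) hK
  rw [Real.norm_of_nonneg (by positivity)]
  exact Real.rpow_le_rpow hmin (min_le_right _ _) hq

theorem continuous_min_norm_rpow (hq : 0 ≤ q) : Continuous fun x : E ↦ min ‖x‖ K ^ q :=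
  (continuous_norm.min continuous_const).rpow_const fun _ ↦ .inr hq

variable [MeasurableSpace E] [OpensMeasurableSpace E]

section Truncation

variable {Ω : Type*} {mΩ : MeasurableSpace Ω} {μ : Measure Ω} {X : Ω → E}

theorem integrable_min_norm_rpow [IsFiniteMeasure μ] (hX : AEMeasurable X μ) (hq : 0 ≤ q)
    (hK : 0 ≤ K) : Integrable (fun ω ↦ min ‖X ω‖ K ^ q) μ :=
  .of_bound (((continuous_min_norm_rpow hq).measurable.comp_aemeasurable hX).aestronglyMeasurable)
    (K ^ q) (.of_forall fun ω ↦ norm_min_norm_rpow_le hq hK (X ω))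

theorem tendsto_integral_min_norm_rpow (hX : AEMeasurable X μ) (hq : 0 ≤ q)
    (hint : Integrable (fun ω ↦ ‖X ω‖ ^ q) μ) :
    Tendsto (fun K ↦ ∫ ω, min ‖X ω‖ K ^ q ∂μ) atTop (𝓝 (∫ ω, ‖X ω‖ ^ q ∂μ)) := by
  refine tendsto_integral_filter_of_dominated_convergence _ (.of_forall fun K ↦
    ((continuous_min_norm_rpow hq).measurable.comp_aemeasurable hX).aestronglyMeasurable)
    ?_ hint (.of_forall fun ω ↦ ?_)
  · filter_upwards [eventually_ge_atTop 0] with K hK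
    refine .of_forall fun ω ↦ ?_
    rw [Real.norm_of_nonneg (Real.rpow_nonneg (le_min (norm_nonneg _) hK) q)]
    exact min_rpow_le_rpow hq hK (norm_nonneg _)
  · refine tendsto_const_nhds.congr' ?_
    filter_upwards [eventually_ge_atTop ‖X ω‖] with K hK
    rw [min_eq_left hK]

theorem abs_integral_norm_rpow_sub_integral_min_le [IsFiniteMeasure μ] (hX : AEMeasurable X μ)
    (hq : 0 ≤ q) (hqr : q ≤ r) (hK : 0 < K) (hint : Integrable (fun ω ↦ ‖X ω‖ ^ r) μ) :
    |∫ ω, ‖X ω‖ ^ q ∂μ - ∫ ω, min ‖X ω‖ K ^ q ∂μ| ≤ K ^ (q - r) * ∫ ω, ‖X ω‖ ^ r ∂μ := by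
  have hmin := integrable_min_norm_rpow hX hq hK.le
  have hbound (ω : Ω) := rpow_le_min_rpow_add hqr hK (norm_nonneg (X ω))
  have hintq : Integrable (fun ω ↦ ‖X ω‖ ^ q) μ := by
    refine (hmin.add (hint.const_mul (K ^ (q - r)))).mono' ?_ (.of_forall fun ω ↦ ?_)
    · exact ((continuous_norm.rpow_const fun _ ↦ .inr hq).measurable.comp_aemeasurable
        hX).aestronglyMeasurable
    · simpa [abs_of_nonneg (Real.rpow_nonneg (norm_nonneg (X ω)) q)] using hbound ω
  rw [abs_of_nonneg (sub_nonneg.2 <| integral_mono hmin hintq fun ω ↦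
    min_rpow_le_rpow hq hK.le (norm_nonneg _)), ← integral_const_mul, sub_le_iff_le_add',
    ← integral_add hmin (hint.const_mul _)]
  exact integral_mono hintq (hmin.add (hint.const_mul _)) hbound

end Truncation

variable {ι Ω' : Type*} {Ω : ι → Type*} {m : ∀ i, MeasurableSpace (Ω i)}
  {μ : (i : ι) → Measure (Ω i)} [∀ i, IsProbabilityMeasure (μ i)] {m' : MeasurableSpace Ω'}
  {μ' : Measure Ω'} [IsProbabilityMeasure μ'] {X : (i : ι) → Ω i → E} {Z : Ω' → E} {l : Filter ι}

theorem tendsto_integral_min_norm_rpow_of_tendstoInDistribution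
    (h : TendstoInDistribution X l Z μ μ') (hq : 0 ≤ q) (hK : 0 ≤ K) :
    Tendsto (fun i ↦ ∫ ω, min ‖X i ω‖ K ^ q ∂μ i) l (𝓝 (∫ ω, min ‖Z ω‖ K ^ q ∂μ')) := by
  have hcont := continuous_min_norm_rpow (E := E) (K := K) hq
  let F : BoundedContinuousFunction E ℝ :=
    .ofNormedAddCommGroup _ hcont _ (norm_min_norm_rpow_le hq hK)
  have hF := ProbabilityMeasure.tendsto_iff_forall_integral_tendsto.1 h.tendsto F
  simpa only [F, BoundedContinuousFunction.coe_ofNormedAddCommGroup, ProbabilityMeasure.coe_mk,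
    integral_map (h.forall_aemeasurable _) hcont.measurable.aestronglyMeasurable,
    integral_map h.aemeasurable_limit hcont.measurable.aestronglyMeasurable] using hF

theorem tendsto_integral_norm_rpow_of_tendstoInDistribution
    (h : TendstoInDistribution X l Z μ μ') (hq : 0 ≤ q) (hqr : q < r)
    (hX : ∀ i, Integrable (fun ω ↦ ‖X i ω‖ ^ r) (μ i)) {B : ℝ}
    (hB : ∀ i, ∫ ω, ‖X i ω‖ ^ r ∂μ i ≤ B) (hZ : Integrable (fun ω ↦ ‖Z ω‖ ^ q) μ') :
    Tendsto (fun i ↦ ∫ ω, ‖X i ω‖ ^ q ∂μ i) l (𝓝 (∫ ω, ‖Z ω‖ ^ q ∂μ')) := by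
  refine TendstoUniformly.tendsto_of_eventually_tendsto
    (F := fun K i ↦ ∫ ω, min ‖X i ω‖ K ^ q ∂μ i) (p := atTop) ?_ ?_
    (tendsto_integral_min_norm_rpow h.aemeasurable_limit hq hZ)
  · rw [Metric.tendstoUniformly_iff]
    intro δ hδ
    have htail : Tendsto (fun K : ℝ ↦ K ^ (q - r) * B) atTop (𝓝 0) := by
      simpa using (tendsto_rpow_neg_atTop (sub_pos.2 hqr)).mul_const B
    filter_upwards [htail.eventually_lt_const hδ, eventually_gt_atTop 0] with K hKδ hK i
    calc _ ≤ K ^ (q - r) * ∫ ω, ‖X i ω‖ ^ r ∂μ i :=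
          abs_integral_norm_rpow_sub_integral_min_le (h.forall_aemeasurable i) hq hqr.le hK (hX i)
      _ ≤ K ^ (q - r) * B := by gcongr; exact hB i
      _ < δ := hKδ
  · filter_upwards [eventually_ge_atTop 0] with K hK
    exact tendsto_integral_min_norm_rpow_of_tendstoInDistribution h hq hK

end MomentConvergence

section RademacherMoments

open ProbabilityTheory
open scoped Topology

instance instMeasurableSingletonClassUnits {M : Type*} [Monoid M] [MeasurableSpace M]
    [MeasurableSingletonClass M] : MeasurableSingletonClass Mˣ where
  measurableSet_singleton u := ⟨{↑u}, measurableSet_singleton _, by ext; simp [Units.ext_iff]⟩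

theorem integral_uniformOn_univ {α : Type*} [Fintype α] [Nonempty α] [MeasurableSpace α]
    [MeasurableSingletonClass α] (f : α → ℝ) :
    ∫ x, f x ∂(uniformOn Set.univ) = 𝔼 x, f x := by
  rw [integral_fintype .of_finite, Fintype.expect_eq_sum_div_card, Finset.sum_div]
  simp [measureReal_def, uniformOn_univ, div_eq_inv_mul]

variable {Ω : Type*} {mΩ : MeasurableSpace Ω} {P : Measure Ω}

theorem integral_comp_eq_expect {ι α : Type*} [Fintype ι] [DecidableEq ι] [Fintype α] [Nonempty α]
    [MeasurableSpace α] [MeasurableSingletonClass α] {X : ι → Ω → α} (hindep : iIndepFun X P)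
    (hX : ∀ i, HasLaw (X i) (uniformOn Set.univ) P) (f : (ι → α) → ℝ) :
    ∫ ω, f (fun i ↦ X i ω) ∂P = 𝔼 x, f x := by
  have hlaw := iIndepFun.hasLaw_pi hX hindep
  rw [← uniformOn_pi, Set.pi_univ] at hlaw
  rw [← integral_uniformOn_univ, ← hlaw.integral_comp (by fun_prop)]
  rfl

theorem integral_abs_rpow_gaussianReal {q : ℝ} (hq : -1 < q) :
    ∫ x, |x| ^ q ∂(gaussianReal 0 1) = 2 ^ (q / 2) * (Real.Gamma ((q + 1) / 2) / √π) := by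
  have hpdf (x : ℝ) : gaussianPDFReal 0 1 x • |x| ^ q
      = (√(2 * π))⁻¹ * (|x| ^ q * Real.exp (-(1 / 2) * |x| ^ (2 : ℝ))) := by
    simp [gaussianPDFReal]
    ring_nf
  simp_rw [integral_gaussianReal_eq_integral_smul one_ne_zero, hpdf]
  rw [integral_const_mul,
    integral_comp_abs (f := fun x ↦ x ^ q * Real.exp (-(1 / 2) * x ^ (2 : ℝ))),
    integral_rpow_mul_exp_neg_mul_rpow two_pos hq (by norm_num), Real.sqrt_mul two_pos.le,
    one_div (2 : ℝ), Real.inv_rpow two_pos.le, ← Real.rpow_neg two_pos.le, neg_div, neg_neg,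
    show (q + 1) / 2 = q / 2 + 1 / 2 by ring, Real.rpow_add two_pos, ← Real.sqrt_eq_rpow]
  field_simp

theorem integral_sq_sum_of_pairwise_indepFun {ι : Type*} {X : ι → Ω → ℝ} {s : Finset ι}
    (hX : ∀ i ∈ s, MemLp (X i) 2 P) (h0 : ∀ i ∈ s, P[X i] = 0)
    (hindep : (s : Set ι).Pairwise fun i j ↦ X i ⟂ᵢ[P] X j) :
    ∫ ω, (∑ i ∈ s, X i ω) ^ 2 ∂P = ∑ i ∈ s, ∫ ω, X i ω ^ 2 ∂P := by
  classical
  have hcross (i : ι) (hi : i ∈ s) (j : ι) (hj : j ∈ s) :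
      ∫ ω, X i ω * X j ω ∂P = if i = j then ∫ ω, X i ω ^ 2 ∂P else 0 := by
    split_ifs with hij
    · simp [hij, sq]
    · rw [(hindep hi hj hij).integral_fun_mul_eq_mul_integral (hX i hi).1 (hX j hj).1, h0 i hi,
        zero_mul]
  have hint (i : ι) (hi : i ∈ s) (j : ι) (hj : j ∈ s) : Integrable (fun ω ↦ X i ω * X j ω) P :=
    (hX i hi).integrable_mul (hX j hj)
  simp_rw [sq (∑ i ∈ s, X i _), Finset.sum_mul_sum]
  rw [integral_finsetSum _ fun i hi ↦ integrable_finsetSum _ fun j hj ↦ hint i hi j hj]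
  refine Finset.sum_congr rfl fun i hi ↦ ?_
  rw [integral_finsetSum _ (hint i hi), Finset.sum_congr rfl (hcross i hi),
    Finset.sum_ite_eq s i, if_pos hi]

variable {X : ℕ → Ω → ℝ}

theorem integral_sq_inv_sqrt_mul_sum_le (hX : ∀ i, MemLp (X i) 2 P) (h0 : ∀ i, P[X i] = 0)
    (h1 : ∀ i, P[X i ^ 2] = 1) (hindep : Pairwise fun i j ↦ X i ⟂ᵢ[P] X j) (n : ℕ) :
    ∫ ω, ((√n)⁻¹ * ∑ k ∈ Finset.range n, X k ω) ^ 2 ∂P ≤ 1 := by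
  have hsum : ∫ ω, (∑ k ∈ Finset.range n, X k ω) ^ 2 ∂P = n := by
    rw [integral_sq_sum_of_pairwise_indepFun (fun i _ ↦ hX i) (fun i _ ↦ h0 i)
      fun i _ j _ hij ↦ hindep hij]
    simpa using Finset.sum_congr rfl fun i (_ : i ∈ Finset.range n) ↦ h1 i
  simp_rw [mul_pow, integral_const_mul, hsum, inv_pow, Real.sq_sqrt n.cast_nonneg]
  exact inv_mul_le_one

theorem tendsto_integral_abs_inv_sqrt_mul_sum_rpow [IsProbabilityMeasure P] (h0 : P[X 0] = 0)
    (h1 : P[X 0 ^ 2] = 1) (hindep : iIndepFun X P)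
    (hident : ∀ i, IdentDistrib (X i) (X 0) P P) {q : ℝ} (hq : 0 ≤ q) (hq2 : q < 2) :
    Tendsto (fun n : ℕ ↦ ∫ ω, |(√n)⁻¹ * ∑ k ∈ Finset.range n, X k ω| ^ q ∂P) atTop
      (𝓝 (2 ^ (q / 2) * (Real.Gamma ((q + 1) / 2) / √π))) := by
  have hX (i : ℕ) : MemLp (X i) 2 P := by
    refine (hident i).memLp_iff.2 ((memLp_two_iff_integrable_sq
      (hident 0).aemeasurable_fst.aestronglyMeasurable).2 (.of_integral_ne_zero ?_))
    exact h1.trans_ne one_ne_zero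
  have hS (n : ℕ) : MemLp (fun ω ↦ (√n)⁻¹ * ∑ k ∈ Finset.range n, X k ω) 2 P :=
    (memLp_finsetSum _ fun i _ ↦ hX i).const_mul _
  have hgauss : Integrable (fun x : ℝ ↦ ‖x‖ ^ q) (gaussianReal 0 1) := by
    simpa [hq] using (memLp_id_gaussianReal (μ := 0) (v := 1) q.toNNReal).integrable_norm_rpow'
  rw [← integral_abs_rpow_gaussianReal (by linarith)]
  refine tendsto_integral_norm_rpow_of_tendstoInDistribution
    (tendstoInDistribution_inv_sqrt_mul_sum .id h0 h1 hindep hident) hq hq2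
    (fun n ↦ ?_) (B := 1) (fun n ↦ ?_) hgauss
  · simpa only [Real.norm_eq_abs, Real.rpow_two, sq_abs] using (hS n).integrable_sq
  · simpa only [Real.norm_eq_abs, Real.rpow_two, sq_abs] using
      integral_sq_inv_sqrt_mul_sum_le hX (fun i ↦ (hident i).integral_eq.trans h0)
      (fun i ↦ (hident i).sq.integral_eq.trans h1) (fun i j hij ↦ hindep.indepFun hij) n

theorem expect_units_int (f : ℤˣ → ℝ) : 𝔼 u, f u = (f 1 + f (-1)) / 2 := by
  rw [Fintype.expect_eq_sum_div_card]
  simp [UnitsInt.univ]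

theorem tendsto_expect_abs_inv_sqrt_mul_sum_units_rpow {q : ℝ} (hq : 0 ≤ q) (hq2 : q < 2) :
    Tendsto (fun n : ℕ ↦ 𝔼 ε : Fin n → ℤˣ, |∑ j, ε j • (√n)⁻¹| ^ q) atTop
      (𝓝 (2 ^ (q / 2) * (Real.Gamma ((q + 1) / 2) / √π))) := by
  obtain ⟨Ω, _, P, X, -, hlaw, hindep, _⟩ := exists_iid ℕ (uniformOn (Set.univ : Set ℤˣ))
  let r (u : ℤˣ) : ℝ := (u : ℤ)
  have hr : Measurable r := by fun_prop
  have hmean (f : ℤˣ → ℝ) : ∫ ω, f (X 0 ω) ∂P = (f 1 + f (-1)) / 2 := by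
    rw [← expect_units_int, ← integral_uniformOn_univ, ← (hlaw 0).integral_comp (by fun_prop)]
    rfl
  refine (tendsto_integral_abs_inv_sqrt_mul_sum_rpow (X := fun k ↦ r ∘ X k) ?_ ?_
    (hindep.comp _ fun _ ↦ hr) (fun i ↦ ((hlaw i).identDistrib (hlaw 0)).comp hr) hq hq2).congr
    fun n ↦ ?_
  · simpa [r] using hmean r
  · simpa [r] using (hmean fun u ↦ r u ^ 2).trans (by norm_num [r])
  · rw [← integral_comp_eq_expect (X := fun j : Fin n ↦ X j) (hindep.precomp Fin.val_injective)
      fun j ↦ hlaw j]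
    simp [r, Finset.sum_range, Finset.mul_sum, Units.smul_def, mul_comm]

end RademacherMoments

namespace IsKhintchineConst

variable {q C : ℝ}

theorem one_le (h : IsKhintchineConst q C) : 1 ≤ C := by
  have habs (u : ℤˣ) : |u • (1 : ℝ)| = 1 := by
    rcases Int.units_eq_one_or u with rfl | rfl <;> simp
  simpa [habs] using h 1 1

theorem two_rpow_le (h : IsKhintchineConst q C) (hq : 0 < q) : (2 : ℝ) ^ (1 / q - 1 / 2) ≤ C := by
  have hmoment : 𝔼 ε : Fin 2 → ℤˣ, |∑ j, ε j • (1 : ℝ)| ^ q = 2 ^ q / 2 := by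
    rw [Fintype.expect_equiv (finTwoArrowEquiv ℤˣ) _ (fun u ↦ |u.1 • (1 : ℝ) + u.2 • (1 : ℝ)| ^ q)
      fun ε ↦ by simp, ← Finset.univ_product_univ, Finset.expect_product]
    simp_rw [expect_units_int]
    norm_num [Real.zero_rpow hq.ne', Units.smul_def]
  have htest : √2 ≤ C * (2 ^ q / 2) ^ (1 / q) := by
    rw [← hmoment]
    simpa using h 2 1
  have hpow : ((2 : ℝ) ^ q / 2) ^ (1 / q) = 2 / 2 ^ (1 / q) := by
    rw [Real.div_rpow (by positivity) two_pos.le, ← Real.rpow_mul two_pos.le,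
      mul_one_div_cancel hq.ne', Real.rpow_one]
  rw [hpow, mul_div_assoc', le_div_iff₀ (by positivity)] at htest
  rw [Real.rpow_sub two_pos, ← Real.sqrt_eq_rpow, div_le_iff₀ (by positivity)]
  refine le_of_mul_le_mul_left ?_ (Real.sqrt_pos.2 two_pos)
  rwa [mul_left_comm, Real.mul_self_sqrt two_pos.le]

theorem one_div_sqrt_two_mul_Gamma_rpow_le (h : IsKhintchineConst q C) (hq : 0 < q) (hq2 : q < 2) :
    (1 / √2) * (Real.Gamma ((q + 1) / 2) / √π) ^ (-(1 / q)) ≤ C := by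
  have hlim := (tendsto_expect_abs_inv_sqrt_mul_sum_units_rpow hq.le hq2).rpow_const
    (.inr (one_div_nonneg.2 hq.le))
  have htest : 1 ≤ C * (2 ^ (q / 2) * (Real.Gamma ((q + 1) / 2) / √π)) ^ (1 / q) := by
    refine ge_of_tendsto (hlim.const_mul C) ?_
    filter_upwards [eventually_ne_atTop 0] with n hn
    simpa [hn] using h n fun _ ↦ (√n)⁻¹
  have hG : 0 < Real.Gamma ((q + 1) / 2) / √π :=
    div_pos (Real.Gamma_pos_of_pos (by linarith)) (by positivity)
  have htwo : ((2 : ℝ) ^ (q / 2)) ^ (1 / q) = √2 := by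
    rw [← Real.rpow_mul two_pos.le, Real.sqrt_eq_rpow]
    congr 1
    field_simp
  rw [Real.mul_rpow (by positivity) hG.le, htwo] at htest
  rw [Real.rpow_neg hG.le, ← div_eq_mul_inv, div_div, div_le_iff₀ (by positivity)]
  exact htest

theorem khintchineA_le (h : IsKhintchineConst q C) (hq : 0 < q) : khintchineA q ≤ C := by
  unfold khintchineA
  split_ifs with _ hq2
  · exact h.two_rpow_le hq
  · exact h.one_div_sqrt_two_mul_Gamma_rpow_le hq hq2
  · exact h.one_le

end IsKhintchineConst

theorem mixed_littlewood_bilinear_optimal_general {p C : ℝ} (hp : 1 < p)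
    (h : IsMixedLittlewoodConst p C) : khintchineA (p / (p - 1)) ≤ C :=
  have hpq : p.HolderConjugate (p / (p - 1)) := .conjExponent hp
  (h.isKhintchineConst hpq).khintchineA_le hpq.symm.pos

/-- Optimality: any constant in the mixed `(ℓ_{p/(p-1)}, ℓ₂)`-Littlewood inequality is
at least `A_{p/(p-1)}`. -/
theorem mixed_littlewood_bilinear_optimal (p : ℝ) (hp : 2 ≤ p) (C : ℝ) (hC : 0 ≤ C)
    (h : ∀ (n : ℕ) (T : (Fin n → ℝ) →ₗ[ℝ] (Fin n → ℝ) →ₗ[ℝ] ℝ),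
      (∑ i : Fin n, (∑ j : Fin n, |T (Pi.single i 1) (Pi.single j 1)| ^ (2 : ℝ))
          ^ ((1 / 2) * (p / (p - 1)))) ^ ((p - 1) / p)
        ≤ C * bilinOpNorm p T) :
    khintchineA (p / (p - 1)) ≤ C :=
  mixed_littlewood_bilinear_optimal_general (by linarith) h
end
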